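/- arXiv:quant-ph/0203087 — 2 statements merged into one kernel-verified Lean document; each statement's English description precedes it below -/
import Mathlib

section
/- For a pair of qubits (dA = dB = 2) and any density matrix ρ on ℂ² ⊗ ℂ², the I-tangle equals the square of the I-concurrence: τ(ρ) = C(ρ)². -/
open Matrix Kronecker
open scoped ComplexOrder

noncomputable section

/-- Partial trace over the second factor. -/
def ptraceA {dA dB : ℕ} (ρ : Matrix (Fin dA × Fin dB) (Fin dA × Fin dB) ℂ) :
    Matrix (Fin dA) (Fin dA) ℂ :=
  Matrix.of fun i i' => ∑ j, ρ (i, j) (i', j)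

/-- Partial trace over the first factor. -/
def ptraceB {dA dB : ℕ} (ρ : Matrix (Fin dA × Fin dB) (Fin dA × Fin dB) ℂ) :
    Matrix (Fin dB) (Fin dB) ℂ :=
  Matrix.of fun j j' => ∑ i, ρ (i, j) (i, j')

/-- The universal state inverter ρ ↦ ρ̃. -/
def inverter {dA dB : ℕ} (ρ : Matrix (Fin dA × Fin dB) (Fin dA × Fin dB) ℂ) :
    Matrix (Fin dA × Fin dB) (Fin dA × Fin dB) ℂ :=
  (Matrix.trace ρᴴ) • (1 : Matrix (Fin dA × Fin dB) (Fin dA × Fin dB) ℂ)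
    - (ptraceA ρ)ᴴ ⊗ₖ (1 : Matrix (Fin dB) (Fin dB) ℂ)
    - (1 : Matrix (Fin dA) (Fin dA) ℂ) ⊗ₖ (ptraceB ρ)ᴴ
    + ρᴴ

/-- The rank-one projector |ψ⟩⟨ψ|. -/
def outer {dA dB : ℕ} (ψ : Fin dA × Fin dB → ℂ) :
    Matrix (Fin dA × Fin dB) (Fin dA × Fin dB) ℂ :=
  Matrix.vecMulVec ψ (star ψ)

/-- A density matrix: positive semidefinite with trace one. -/
def IsDensityMatrix {m : Type*} [Fintype m] [DecidableEq m] (ρ : Matrix m m ℂ) : Prop :=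
  ρ.PosSemidef ∧ ρ.trace = 1

/-- The pure-state tangle ⟨ψ| ρ̃_ψ |ψ⟩ with ρ_ψ = |ψ⟩⟨ψ|. -/
def pureTangle {dA dB : ℕ} (ψ : Fin dA × Fin dB → ℂ) : ℝ :=
  (star ψ ⬝ᵥ (inverter (outer ψ) *ᵥ ψ)).re

/-- The I-tangle: the infimum of Σᵢ pᵢ ⟨ψᵢ| ρ̃ᵢ |ψᵢ⟩ over pure-state decompositions of ρ. -/
def Itangle {dA dB : ℕ} (ρ : Matrix (Fin dA × Fin dB) (Fin dA × Fin dB) ℂ) : ℝ :=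
  sInf { t | ∃ (n : ℕ) (p : Fin n → ℝ) (ψ : Fin n → (Fin dA × Fin dB → ℂ)),
    (∀ i, 0 < p i) ∧ (∑ i, p i = 1) ∧ (∀ i, star (ψ i) ⬝ᵥ ψ i = 1) ∧
    ρ = ∑ i, (p i : ℂ) • outer (ψ i) ∧
    t = ∑ i, p i * pureTangle (ψ i) }


/-- The I-concurrence: the infimum of Σᵢ pᵢ √⟨ψᵢ| ρ̃ᵢ |ψᵢ⟩ over pure-state
decompositions of ρ. -/
def Iconcurrence {dA dB : ℕ} (ρ : Matrix (Fin dA × Fin dB) (Fin dA × Fin dB) ℂ) : ℝ :=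
  sInf { t | ∃ (n : ℕ) (p : Fin n → ℝ) (ψ : Fin n → (Fin dA × Fin dB → ℂ)),
    (∀ i, 0 < p i) ∧ (∑ i, p i = 1) ∧ (∀ i, star (ψ i) ⬝ᵥ ψ i = 1) ∧
    ρ = ∑ i, (p i : ℂ) • outer (ψ i) ∧
    t = ∑ i, p i * Real.sqrt (pureTangle (ψ i)) }

/-!
A decomposition of `ρ` into unnormalised pure states `wₖ` is a matrix `W` with columns `wₖ` and
`W * Wᴴ = ρ`. For two qubits the tangle of `ψ` is `‖ψ ⬝ᵥ S *ᵥ ψ‖ ^ 2` with `S` the symmetric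
spin-flip matrix, so a decomposition enters only through the diagonals of `Wᵀ * S * W` and `Wᴴ * W`.
For any symmetric `S` there is a decomposition that minimises the average of `‖ψ ⬝ᵥ S *ᵥ ψ‖` and on
which that function is constant; by Jensen's inequality it minimises the average of the square too.

Takagi's factorisation gives `V * Vᴴ = ρ` with `Vᵀ * S * V` diagonal, with entries `dᵢ ≥ 0`. All
other decompositions are `V * A`, and the reverse triangle inequality bounds their averages below
by `2 dᵢ - ∑ dⱼ` for every `i`. If this number is nonnegative for some `i`, rephasing the columns of
`V` turns the diagonal into `dᵢ` and `-dⱼ`, whose sum is the bound; a real coisometry, built from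
the spectral theorem and all sign vectors, then spreads it over the new states in proportion to
their norms. Otherwise the `dᵢ` are the side lengths of a closed polygon, so rephasing makes the
diagonal sum to zero, and the sign vectors alone give states on which the form vanishes.
-/

open scoped InnerProductSpace

section Takagi

universe u

variable {E : Type u} [NormedAddCommGroup E] [InnerProductSpace ℂ E] [FiniteDimensional ℂ E]
  {B : LinearMap.BilinForm ℂ E}

variable (B) in
lemma exists_linearMap_real_inner_eq_re :
    letI := InnerProductSpace.complexToReal (G := E)
    ∃ T : E →ₗ[ℝ] E, ∀ x y, ⟪T x, y⟫_ℝ = (B x y).re := by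
  let := InnerProductSpace.complexToReal (G := E)
  have : CompleteSpace E := FiniteDimensional.complete ℂ E
  let reForm : E →ₗ[ℝ] E →L[ℝ] ℝ :=
    { toFun x := LinearMap.toContinuousLinearMap (Complex.reLm ∘ₗ (B x).restrictScalars ℝ)
      map_add' x y := by ext; simp
      map_smul' a x := by ext; simp }
  exact ⟨(InnerProductSpace.toDual ℝ E).symm.toLinearEquiv.toLinearMap ∘ₗ reForm,
    fun x y => by simp [reForm]⟩

lemma exists_real_coneigenvector [Nontrivial E] (hB : B.IsSymm) :
    ∃ (x : E) (c : ℝ), ‖x‖ = 1 ∧ ∀ y, B x y = c * ⟪x, y⟫_ℂ := by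
  let := InnerProductSpace.complexToReal (G := E)
  obtain ⟨T, hTB⟩ := exists_linearMap_real_inner_eq_re B
  have hT : T.IsSymmetric := fun x y => by
    rw [hTB, real_inner_comm, hTB, hB.eq]
  obtain ⟨x, hx⟩ := hT.hasEigenvalue_iSup_of_finiteDimensional.exists_hasEigenvector
  set c := ⨆ x : {x : E // x ≠ 0}, RCLike.re ⟪T ↑x, ↑x⟫_ℝ / ‖(x : E)‖ ^ 2
  have hre (y : E) : (B x y).re = c * (⟪x, y⟫_ℂ).re := by
    rw [← hTB, hx.apply_eq_smul, real_inner_smul_left, real_inner_eq_re_inner ℂ]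
    rfl
  have hBx (y : E) : B x y = c * ⟪x, y⟫_ℂ := by
    apply Complex.ext
    · simpa using hre y
    · simpa [inner_smul_right] using hre (Complex.I • y)
  refine ⟨((‖x‖⁻¹ : ℝ) : ℂ) • x, c, by simp [norm_smul, hx.2], fun y => ?_⟩
  rw [map_smul, LinearMap.smul_apply, hBx, inner_smul_left, Complex.conj_ofReal, smul_eq_mul]
  ring

lemma exists_coneigenvector [Nontrivial E] (hB : B.IsSymm) :
    ∃ (x : E) (c : ℝ), ‖x‖ = 1 ∧ 0 ≤ c ∧ ∀ y, B x y = c * ⟪x, y⟫_ℂ := by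
  obtain ⟨x, c, hx, hBx⟩ := exists_real_coneigenvector hB
  obtain hc | hc := le_total 0 c
  · exact ⟨x, c, hx, hc, hBx⟩
  · refine ⟨Complex.I • x, -c, by simpa [norm_smul] using hx, by simpa using hc, fun y => ?_⟩
    rw [map_smul, LinearMap.smul_apply, hBx, inner_smul_left, Complex.conj_I, smul_eq_mul,
      Complex.ofReal_neg]
    ring

theorem exists_orthonormal_diagonal (n : ℕ) :
    ∀ {E : Type u} [NormedAddCommGroup E] [InnerProductSpace ℂ E] [FiniteDimensional ℂ E]
      {B : LinearMap.BilinForm ℂ E}, Module.finrank ℂ E = n → B.IsSymm →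
    ∃ (b : Fin n → E) (d : Fin n → ℝ), Orthonormal ℂ b ∧ (∀ i, 0 ≤ d i) ∧
      ∀ i j, B (b i) (b j) = if i = j then (d i : ℂ) else 0 := by
  induction n with
  | zero => exact fun _ _ => ⟨![], ![], ⟨fun i => i.elim0, fun i => i.elim0⟩, by simp, by simp⟩
  | succ n ih =>
    intro E _ _ _ B hE hB
    have : Nontrivial E := Module.nontrivial_of_finrank_pos (R := ℂ) (by lia)
    have : Fact (Module.finrank ℂ E = n + 1) := ⟨hE⟩
    obtain ⟨x, c, hx, hc, hBx⟩ := exists_coneigenvector hB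
    have hx0 : x ≠ 0 := norm_ne_zero_iff.mp (by simp [hx])
    obtain ⟨b, d, hb, hd, hbd⟩ :=
      ih (Submodule.finrank_orthogonal_span_singleton hx0) (hB.restrict (ℂ ∙ x)ᗮ)
    have hxb (i : Fin n) : ⟪x, (b i : E)⟫_ℂ = 0 :=
      Submodule.mem_orthogonal_singleton_iff_inner_right.mp (b i).2
    have hBxb (i : Fin n) : B x (b i) = 0 := by rw [hBx, hxb, mul_zero]
    have hBbb (i j : Fin n) : B (b i) (b j) = if i = j then (d i : ℂ) else 0 := hbd i j
    refine ⟨vecCons x fun i => (b i : E), vecCons c d, ?_, ?_, ?_⟩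
    · exact orthonormal_vecCons_iff.mpr ⟨hx, hxb, hb.comp_linearIsometry (ℂ ∙ x)ᗮ.subtypeₗᵢ⟩
    · simpa [Fin.forall_fin_succ] using ⟨hc, hd⟩
    · simp [Fin.forall_fin_succ, hBx x, hBxb, hBbb, ← hB.eq x, hx, (Fin.succ_ne_zero _).symm]

end Takagi

theorem exists_unitary_transpose_mul_mul_eq_diagonal {m : Type*} [Fintype m] [DecidableEq m]
    {A : Matrix m m ℂ} (hA : A.IsSymm) :
    ∃ (U : Matrix m m ℂ) (d : m → ℝ), U * Uᴴ = 1 ∧ (∀ i, 0 ≤ d i) ∧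
      Uᵀ * A * U = diagonal fun i => (d i : ℂ) := by
  let ofLp := (WithLp.linearEquiv 2 ℂ (m → ℂ)).toLinearMap
  let B : LinearMap.BilinForm ℂ (EuclideanSpace ℂ m) := A.toBilin'.comp ofLp ofLp
  have B_apply (x y : EuclideanSpace ℂ m) : B x y = x.ofLp ⬝ᵥ A *ᵥ y.ofLp :=
    toBilin'_apply' A _ _
  have hB : B.IsSymm := ⟨fun x y => by
    rw [B_apply, B_apply, dotProduct_mulVec, dotProduct_comm, ← mulVec_transpose, hA.eq]⟩
  obtain ⟨b, d, hb, hd, hbd⟩ := exists_orthonormal_diagonal (Fintype.card m) (by simp) hB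
  let e : m ≃ Fin (Fintype.card m) := Fintype.equivFin m
  let U : Matrix m m ℂ := of fun a i => b (e i) a
  have hU : Uᴴ * U = 1 := by
    ext i j
    have := orthonormal_iff_ite.mp hb (e i) (e j)
    rw [EuclideanSpace.inner_eq_star_dotProduct, dotProduct_comm] at this
    simp only [e.apply_eq_iff_eq] at this
    rw [one_apply, ← this]
    rfl
  refine ⟨U, d ∘ e, mul_eq_one_comm.mp hU, fun i => hd _, ?_⟩
  ext i j
  have := hbd (e i) (e j)
  simp only [B_apply, e.apply_eq_iff_eq] at this
  rw [diagonal_apply, Function.comp_apply, ← this, Matrix.mul_assoc]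
  rfl

lemma range_mulVecLin_self_mul_conjTranspose {m n : Type*} [Fintype m] [Fintype n]
    (A : Matrix m n ℂ) : (A * Aᴴ).mulVecLin.range = A.mulVecLin.range := by
  refine Submodule.eq_of_le_of_finrank_eq ?_ (rank_self_mul_conjTranspose A)
  rw [mulVecLin_mul]
  exact LinearMap.range_comp_le_range _ _

lemma exists_eq_mul_of_mul_conjTranspose_eq {m n k : Type*} [Finite m] [Fintype n] [Fintype k]
    {V : Matrix m n ℂ} {W : Matrix m k ℂ} (h : W * Wᴴ = V * Vᴴ) :
    ∃ A : Matrix n k ℂ, W = V * A := by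
  classical
  have := Fintype.ofFinite m
  have hcol (i : k) : ∃ a : n → ℂ, V *ᵥ a = W.col i := by
    have : W.col i ∈ V.mulVecLin.range := by
      rw [← range_mulVecLin_self_mul_conjTranspose, ← h, range_mulVecLin_self_mul_conjTranspose]
      exact ⟨Pi.single i 1, by simp⟩
    simpa using this
  choose a ha using hcol
  refine ⟨(of a)ᵀ, ?_⟩
  ext x i
  exact (congrFun (ha i) x).symm

section Signs

variable {ι : Type*} [Fintype ι] [DecidableEq ι]

variable (ι) in
/-- The matrix whose columns are all sign vectors `ε : ι → {±1}`, scaled so that its rows are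
orthonormal. -/
def signMatrix : Matrix ι (ι → ℤˣ) ℝ :=
  of fun i ε => (√(Fintype.card (ι → ℤˣ)))⁻¹ * (ε i : ℤ)

lemma signMatrix_mul_self (i : ι) (ε : ι → ℤˣ) :
    signMatrix ι i ε * signMatrix ι i ε = (Fintype.card (ι → ℤˣ) : ℝ)⁻¹ := by
  have hε : ((ε i : ℤ) : ℝ) * (ε i : ℤ) = 1 := by exact_mod_cast Int.units_coe_mul_self (ε i)
  rw [signMatrix, of_apply, mul_mul_mul_comm, hε, mul_one, ← mul_inv,
    Real.mul_self_sqrt (Nat.cast_nonneg _)]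

lemma signMatrix_mulSingle_mul (i : ι) (ε : ι → ℤˣ) :
    signMatrix ι i (Pi.mulSingle i (-1) * ε) = -signMatrix ι i ε := by
  simp [signMatrix]

lemma signMatrix_mulSingle_mul_of_ne {i j : ι} (h : j ≠ i) (ε : ι → ℤˣ) :
    signMatrix ι j (Pi.mulSingle i (-1) * ε) = signMatrix ι j ε := by
  simp [signMatrix, h]

lemma signMatrix_mul_transpose : signMatrix ι * (signMatrix ι)ᵀ = 1 := by
  ext i j
  obtain rfl | hij := eq_or_ne i j
  · simp [Matrix.mul_apply, signMatrix_mul_self]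
  · have flip := Equiv.sum_comp (Equiv.mulLeft (Pi.mulSingle i (-1)))
      fun ε : ι → ℤˣ => signMatrix ι i ε * signMatrix ι j ε
    simp only [Equiv.coe_mulLeft, signMatrix_mulSingle_mul, signMatrix_mulSingle_mul_of_ne hij.symm,
      neg_mul, Finset.sum_neg_distrib] at flip
    simpa [Matrix.mul_apply, hij] using self_eq_neg.mp flip.symm

lemma transpose_mul_diagonal_mul_apply_self {R κ : Type*} [CommSemiring R] (A : Matrix ι κ R)
    (d : ι → R) (k : κ) : (Aᵀ * diagonal d * A) k k = ∑ i, d i * A i k ^ 2 := by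
  rw [Matrix.mul_apply]
  simp only [mul_diagonal, transpose_apply]
  exact Finset.sum_congr rfl fun i _ => by ring

lemma exists_orthogonal_transpose_mul_mul_eq_diagonal {M : Matrix ι ι ℝ} (hM : M.IsSymm) :
    ∃ (Q : Matrix ι ι ℝ) (d : ι → ℝ), Q * Qᵀ = 1 ∧ Qᵀ * M * Q = diagonal d := by
  have hM' : M.IsHermitian := by rwa [IsHermitian, conjTranspose_eq_transpose_of_trivial]
  refine ⟨hM'.eigenvectorUnitary, hM'.eigenvalues, ?_, ?_⟩ <;>
    rw [← conjTranspose_eq_transpose_of_trivial, ← star_eq_conjTranspose]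
  · exact Unitary.coe_mul_star_self _
  · rw [← Unitary.conjStarAlgAut_star_apply (S := ℝ), hM'.conjStarAlgAut_star_eigenvectorUnitary]
    simp

theorem exists_transpose_mul_mul_apply_self_eq_zero {M : Matrix ι ι ℝ} (hM : M.IsSymm)
    (htr : M.trace = 0) :
    ∃ O : Matrix ι (ι → ℤˣ) ℝ, O * Oᵀ = 1 ∧ ∀ ε, (Oᵀ * M * O) ε ε = 0 := by
  obtain ⟨Q, d, hQ, hd⟩ := exists_orthogonal_transpose_mul_mul_eq_diagonal hM
  have hsum : ∑ i, d i = 0 := by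
    rw [← trace_diagonal, ← hd, trace_mul_comm, ← Matrix.mul_assoc, hQ, Matrix.one_mul, htr]
  refine ⟨Q * signMatrix ι, ?_, fun ε => ?_⟩
  · rw [transpose_mul, Matrix.mul_assoc, ← Matrix.mul_assoc _ _ Qᵀ, signMatrix_mul_transpose,
      Matrix.one_mul, hQ]
  · have : (Q * signMatrix ι)ᵀ * M * (Q * signMatrix ι) =
        (signMatrix ι)ᵀ * (Qᵀ * M * Q) * signMatrix ι := by
      simp only [transpose_mul, Matrix.mul_assoc]
    rw [this, hd, transpose_mul_diagonal_mul_apply_self]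
    simp only [sq, signMatrix_mul_self, ← Finset.sum_mul, hsum, zero_mul]

end Signs

section Polygon

open Complex

lemma exists_norm_one_mul_add_mul_eq {x y s : ℝ} (h₁ : |x - y| ≤ s) (h₂ : s ≤ x + y) :
    ∃ u v : ℂ, ‖u‖ = 1 ∧ ‖v‖ = 1 ∧ u * x + v * y = s := by
  let f (θ : ℝ) : ℂ := x + exp (θ * I) * y
  have hf : Continuous fun θ => ‖f θ‖ := by fun_prop
  have hs : s ∈ Set.Icc ‖f Real.pi‖ ‖f 0‖ := by
    constructor
    · simpa [f, exp_pi_mul_I, ← sub_eq_add_neg, ← ofReal_sub, norm_real] using h₁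
    · simpa [f, ← ofReal_add, norm_real] using h₂.trans (le_abs_self _)
  obtain ⟨θ, -, hθ⟩ := intermediate_value_Icc' Real.pi_pos.le hf.continuousOn hs
  let e : ℂ := exp (-((f θ).arg * I))
  have he : ‖e‖ = 1 := by simpa [e] using norm_exp_ofReal_mul_I (-(f θ).arg)
  refine ⟨e, e * exp (θ * I), he, by rw [norm_mul, he, norm_exp_ofReal_mul_I, one_mul], ?_⟩
  calc e * x + e * exp (θ * I) * y = e * f θ := by ring
    _ = e * (‖f θ‖ * exp ((f θ).arg * I)) := by rw [norm_mul_exp_arg_mul_I]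
    _ = s * (e * exp ((f θ).arg * I)) := by
      simp only at hθ
      rw [hθ]
      ring
    _ = s := by rw [← exp_add, neg_add_cancel, exp_zero, mul_one]

lemma exists_norm_one_sum_mul_eq {ι : Type*} (s : Finset ι) {l : ι → ℝ} (hl : ∀ i, 0 ≤ l i) :
    ∀ r : ℝ, 0 ≤ r → r ≤ ∑ i ∈ s, l i → (∀ i ∈ s, 2 * l i ≤ r + ∑ j ∈ s, l j) →
      ∃ z : ι → ℂ, (∀ i, ‖z i‖ = 1) ∧ ∑ i ∈ s, z i * l i = r := by
  classical
  induction s using Finset.induction_on with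
  | empty =>
    intro r hr hr' _
    obtain rfl : r = 0 := le_antisymm (by simpa using hr') hr
    exact ⟨1, by simp, by simp⟩
  | insert a s ha ih =>
    intro r hr hrs hmax
    simp only [Finset.sum_insert ha, Finset.forall_mem_insert] at hrs hmax
    obtain ⟨hmax_a, hmax_s⟩ := hmax
    have hl_le (i) (hi : i ∈ s) : l i ≤ ∑ j ∈ s, l j :=
      Finset.single_le_sum (fun j _ => hl j) hi
    -- Lay off `l a` last: the remaining sides must then close up to a diagonal of length `t`.
    let t := min (r + l a) (∑ i ∈ s, l i)
    have ht : 0 ≤ t := le_min (add_nonneg hr (hl a)) (Finset.sum_nonneg fun i _ => hl i)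
    have hmax_t (i) (hi : i ∈ s) : 2 * l i ≤ t + ∑ j ∈ s, l j := by
      rw [← sub_le_iff_le_add]
      exact le_min (by linarith [hmax_s i hi]) (by linarith [hl_le i hi])
    have hle : l a - r ≤ t := le_min (by linarith) (by linarith)
    have hge : r - l a ≤ t := le_min (by linarith [hl a]) (by linarith)
    have htr : t ≤ r + l a := min_le_left _ _
    obtain ⟨u, v, hu, hv, huv⟩ :=
      exists_norm_one_mul_add_mul_eq (abs_sub_le_iff.mpr ⟨by linarith, by linarith⟩)
        (sub_le_iff_le_add'.mp hge)
    obtain ⟨z, hz, hzs⟩ := ih t ht (min_le_right _ _) hmax_t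
    refine ⟨Function.update (fun i => v * z i) a u, fun i => ?_, ?_⟩
    · obtain rfl | hi := eq_or_ne i a
      · simpa using hu
      · simp [hi, hv, hz]
    · have hne (i) (hi : i ∈ s) : i ≠ a := ne_of_mem_of_not_mem hi ha
      rw [Finset.sum_insert ha, Function.update_self, ← huv, ← hzs, Finset.mul_sum]
      congr 1
      exact Finset.sum_congr rfl fun i hi => by rw [Function.update_of_ne (hne i hi), mul_assoc]

end Polygon

section Ensembles

open Complex (ofRealHom)

variable {m n k : Type*} [Fintype m] [Fintype n] {S : Matrix m m ℂ} {V : Matrix m n ℂ}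

lemma mul_map_ofRealHom_mul_conjTranspose [Fintype k] [DecidableEq n] {m : Type*} (V : Matrix m n ℂ)
    {O : Matrix n k ℝ} (hO : O * Oᵀ = 1) :
    V * O.map ofRealHom * (V * O.map ofRealHom)ᴴ = V * Vᴴ := by
  have hO' : O.map ofRealHom * (O.map ofRealHom)ᴴ = 1 := by
    have : (O.map ofRealHom)ᴴ = Oᵀ.map ofRealHom := by ext; simp
    rw [this, ← Matrix.map_mul, hO]
    simp
  rw [conjTranspose_mul, Matrix.mul_assoc, ← Matrix.mul_assoc _ _ Vᴴ, hO', Matrix.one_mul]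

lemma exists_rephasing [DecidableEq n] {d z : n → ℂ} (hV : Vᵀ * S * V = diagonal d)
    (hz : ∀ i, ‖z i‖ = 1) :
    ∃ V' : Matrix m n ℂ, V' * V'ᴴ = V * Vᴴ ∧ V'ᵀ * S * V' = diagonal fun i => z i * d i := by
  choose u hu using fun i => IsAlgClosed.exists_pow_nat_eq (z i) two_pos
  have hu_norm (i : n) : ‖u i‖ = 1 := by
    rw [← pow_eq_one_iff_of_nonneg (norm_nonneg _) two_ne_zero, ← norm_pow, hu, hz]
  refine ⟨V * diagonal u, ?_, ?_⟩
  · have : diagonal u * (diagonal u)ᴴ = 1 := by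
      simp [diagonal_conjTranspose, diagonal_mul_diagonal, Complex.mul_conj', hu_norm]
    rw [conjTranspose_mul, Matrix.mul_assoc, ← Matrix.mul_assoc _ _ Vᴴ, this, Matrix.one_mul]
  · calc (V * diagonal u)ᵀ * S * (V * diagonal u)
        = diagonal u * (Vᵀ * S * V) * diagonal u := by
          simp only [transpose_mul, diagonal_transpose, Matrix.mul_assoc]
      _ = diagonal fun i => z i * d i := by
          simp only [hV, diagonal_mul_diagonal, ← hu]
          congr! 2
          ring

theorem exists_null_ensemble_of_sum_eq_zero [DecidableEq n] {d : n → ℂ}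
    (hV : Vᵀ * S * V = diagonal d) (hd : ∑ i, d i = 0) :
    ∃ W : Matrix m (n → ℤˣ) ℂ, W * Wᴴ = V * Vᴴ ∧ ∀ ε, (Wᵀ * S * W) ε ε = 0 := by
  refine ⟨V * (signMatrix n).map ofRealHom,
    mul_map_ofRealHom_mul_conjTranspose V signMatrix_mul_transpose, fun ε => ?_⟩
  have : (V * (signMatrix n).map ofRealHom)ᵀ * S * (V * (signMatrix n).map ofRealHom) =
      ((signMatrix n).map ofRealHom)ᵀ * (Vᵀ * S * V) * (signMatrix n).map ofRealHom := by
    simp only [transpose_mul, Matrix.mul_assoc]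
  rw [this, hV, transpose_mul_diagonal_mul_apply_self]
  simp only [map_apply, sq, ← map_mul, signMatrix_mul_self, ← Finset.sum_mul, hd, zero_mul]

lemma map_re_mul_map_ofRealHom {m : Type*} (A : Matrix m n ℂ) (O : Matrix n k ℝ) :
    (A * O.map ofRealHom).map Complex.re = A.map Complex.re * O := by
  ext
  simp [Matrix.mul_apply]

lemma map_re_conjTranspose {m n : Type*} (A : Matrix m n ℂ) :
    Aᴴ.map Complex.re = (A.map Complex.re)ᵀ := by
  ext
  simp

theorem exists_proportional_ensemble [DecidableEq n] {R : Matrix n n ℝ} (hR : R.IsSymm)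
    (hV : Vᵀ * S * V = R.map ofRealHom) (htr : (V * Vᴴ).trace = 1) :
    ∃ W : Matrix m (n → ℤˣ) ℂ, W * Wᴴ = V * Vᴴ ∧
      ∀ ε, (Wᵀ * S * W) ε ε = R.trace * (Wᴴ * W) ε ε := by
  let G : Matrix n n ℝ := (Vᴴ * V).map Complex.re
  have hG : G.IsSymm := by
    ext i j
    simpa [G] using congrArg Complex.re ((isHermitian_conjTranspose_mul_self V).apply i j)
  have hG_tr : G.trace = 1 := by
    rw [trace_mul_comm] at htr
    simpa [G, Matrix.trace] using congrArg Complex.re htr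
  obtain ⟨O, hO, hO_diag⟩ := exists_transpose_mul_mul_apply_self_eq_zero
    (M := R - R.trace • G) (hR.sub (hG.smul _)) (by simp [hG_tr])
  refine ⟨V * O.map ofRealHom, mul_map_ofRealHom_mul_conjTranspose V hO, fun ε => ?_⟩
  set W := V * O.map ofRealHom
  have hWS : Wᵀ * S * W = (Oᵀ * R * O).map ofRealHom := by
    simp only [Matrix.map_mul, ← hV, W, transpose_mul, transpose_map, Matrix.mul_assoc]
  have hWW : (Wᴴ * W).map Complex.re = Oᵀ * G * O := by
    have : Wᴴ * W = (Vᴴ * V * O.map ofRealHom)ᴴ * O.map ofRealHom := by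
      simp only [W, conjTranspose_mul, conjTranspose_conjTranspose, Matrix.mul_assoc]
    rw [this, map_re_mul_map_ofRealHom, map_re_conjTranspose, map_re_mul_map_ofRealHom,
      transpose_mul, hG.eq]
  have hεε : (Oᵀ * R * O) ε ε = R.trace * (Oᵀ * G * O) ε ε := by
    simpa [Matrix.mul_sub, Matrix.sub_mul, sub_eq_zero] using hO_diag ε
  rw [hWS, map_apply, hεε, ← hWW, map_apply,
    ← (isHermitian_conjTranspose_mul_self W).coe_re_apply_self]
  simp

end Ensembles

section LowerBound

lemma two_mul_norm_sub_sum_norm_le_norm_sum {ι E : Type*} [Fintype ι] [SeminormedAddCommGroup E]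
    (f : ι → E) (i : ι) : 2 * ‖f i‖ - ∑ j, ‖f j‖ ≤ ‖∑ j, f j‖ := by
  classical
  rw [← Finset.add_sum_erase _ f (Finset.mem_univ i),
    ← Finset.add_sum_erase _ (‖f ·‖) (Finset.mem_univ i)]
  have := norm_sub_le_norm_add (f i) (∑ j ∈ Finset.univ.erase i, f j)
  linarith [norm_sum_le (Finset.univ.erase i) f]

variable {m n k : Type*} [Fintype m] [Fintype n] [DecidableEq n] [Fintype k] {S : Matrix m m ℂ}
  {V : Matrix m n ℂ} {d : n → ℂ}

lemma sum_norm_sq_row_eq_one {L : Matrix n m ℂ} (hV : L * V = diagonal d) {A : Matrix n k ℂ}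
    (hA : V * A * (V * A)ᴴ = V * Vᴴ) {i : n} (hi : d i ≠ 0) : ∑ j, ‖A i j‖ ^ 2 = 1 := by
  have h : diagonal d * (A * Aᴴ) * (diagonal d)ᴴ = diagonal d * (diagonal d)ᴴ := by
    calc diagonal d * (A * Aᴴ) * (diagonal d)ᴴ = L * (V * A * (V * A)ᴴ) * Lᴴ := by
          simp only [← hV, conjTranspose_mul, Matrix.mul_assoc]
      _ = diagonal d * (diagonal d)ᴴ := by
          rw [hA]
          simp only [← hV, conjTranspose_mul, Matrix.mul_assoc]
  have hii : (A * Aᴴ) i i = 1 := by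
    have := congrFun (congrFun h i) i
    simp only [diagonal_conjTranspose, mul_diagonal, diagonal_mul,
      diagonal_apply_eq, Pi.star_apply] at this
    exact mul_left_cancel₀ hi
      (mul_right_cancel₀ (star_ne_zero.mpr hi) (this.trans (by rw [mul_one])))
  simp only [Matrix.mul_apply, conjTranspose_apply, RCLike.star_def, Complex.mul_conj'] at hii
  exact_mod_cast hii

theorem two_mul_norm_sub_sum_norm_le (hV : Vᵀ * S * V = diagonal d) {W : Matrix m k ℂ}
    (hW : W * Wᴴ = V * Vᴴ) (i : n) :
    2 * ‖d i‖ - ∑ j, ‖d j‖ ≤ ∑ l, ‖(Wᵀ * S * W) l l‖ := by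
  obtain ⟨A, rfl⟩ := exists_eq_mul_of_mul_conjTranspose_eq hW
  have hrow (j : n) : ∑ l, ‖d j * A j l ^ 2‖ = ‖d j‖ := by
    obtain hj | hj := eq_or_ne (d j) 0
    · simp [hj]
    · simp only [norm_mul, norm_pow, ← Finset.mul_sum, sum_norm_sq_row_eq_one hV hW hj, mul_one]
  have hdiag (l : k) : ((V * A)ᵀ * S * (V * A)) l l = ∑ j, d j * A j l ^ 2 := by
    rw [← transpose_mul_diagonal_mul_apply_self, ← hV]
    simp only [transpose_mul, Matrix.mul_assoc]
  calc 2 * ‖d i‖ - ∑ j, ‖d j‖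
      = ∑ l, (2 * ‖d i * A i l ^ 2‖ - ∑ j, ‖d j * A j l ^ 2‖) := by
        rw [Finset.sum_sub_distrib, Finset.sum_comm, ← Finset.mul_sum]
        simp only [hrow]
    _ ≤ ∑ l, ‖((V * A)ᵀ * S * (V * A)) l l‖ := by
        gcongr with l
        rw [hdiag]
        exact two_mul_norm_sub_sum_norm_le_norm_sum (fun j => d j * A j l ^ 2) i

end LowerBound

section Optimal

open scoped MatrixOrder

variable {m : Type*} [Fintype m] [DecidableEq m] {S ρ : Matrix m m ℂ}

lemma exists_diagonal_ensemble (hS : S.IsSymm) (hρ : ρ.PosSemidef) :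
    ∃ (V : Matrix m m ℂ) (d : m → ℝ), V * Vᴴ = ρ ∧ (∀ i, 0 ≤ d i) ∧
      Vᵀ * S * V = diagonal fun i => (d i : ℂ) := by
  obtain ⟨X, rfl⟩ := CStarAlgebra.nonneg_iff_eq_mul_star_self.mp hρ.nonneg
  have hX : (Xᵀ * S * X).IsSymm := by
    simp only [IsSymm, transpose_mul, transpose_transpose, hS.eq, Matrix.mul_assoc]
  obtain ⟨U, d, hU, hd, hUd⟩ := exists_unitary_transpose_mul_mul_eq_diagonal hX
  refine ⟨X * U, d, ?_, hd, ?_⟩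
  · rw [conjTranspose_mul, Matrix.mul_assoc, ← Matrix.mul_assoc _ _ Xᴴ, hU, Matrix.one_mul,
      star_eq_conjTranspose]
  · rw [← hUd]
    simp only [transpose_mul, Matrix.mul_assoc]

lemma exists_flat_ensemble_of_sum_le {V : Matrix m m ℂ} {d : m → ℝ}
    (hV : Vᵀ * S * V = diagonal fun i => (d i : ℂ)) (htr : (V * Vᴴ).trace = 1) {i : m}
    (hi : ∑ j, d j ≤ 2 * d i) :
    ∃ W : Matrix m (m → ℤˣ) ℂ, W * Wᴴ = V * Vᴴ ∧
      ∀ ε, ‖(Wᵀ * S * W) ε ε‖ = (2 * d i - ∑ j, d j) * ‖(Wᴴ * W) ε ε‖ := by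
  let z (j : m) : ℝ := if j = i then 1 else -1
  have hz (j : m) : ‖(z j : ℂ)‖ = 1 := by
    rw [Complex.norm_real]
    obtain rfl | hj := eq_or_ne j i <;> simp [z, *]
  have hsum : ∑ j, z j * d j = 2 * d i - ∑ j, d j := by
    rw [eq_sub_iff_add_eq, ← Finset.sum_add_distrib, Finset.sum_eq_single i] <;>
      simp +contextual [z, two_mul]
  obtain ⟨V', hV', hV'S⟩ := exists_rephasing hV hz
  obtain ⟨W, hW, hWS⟩ := exists_proportional_ensemble (S := S) (V := V')
    (R := diagonal fun j => z j * d j) (diagonal_transpose _)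
    (by rw [hV'S, diagonal_map (map_zero _)]; simp) (by rw [hV', htr])
  refine ⟨W, hW.trans hV', fun ε => ?_⟩
  rw [hWS, trace_diagonal, hsum, norm_mul, Complex.norm_real,
    Real.norm_of_nonneg (sub_nonneg.mpr hi)]

lemma exists_null_ensemble_of_two_mul_le_sum {V : Matrix m m ℂ} {d : m → ℝ} (hd : ∀ i, 0 ≤ d i)
    (hV : Vᵀ * S * V = diagonal fun i => (d i : ℂ)) (h : ∀ i, 2 * d i ≤ ∑ j, d j) :
    ∃ W : Matrix m (m → ℤˣ) ℂ, W * Wᴴ = V * Vᴴ ∧ ∀ ε, (Wᵀ * S * W) ε ε = 0 := by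
  obtain ⟨z, hz, hsum⟩ := exists_norm_one_sum_mul_eq Finset.univ hd 0 le_rfl
    (Finset.sum_nonneg fun i _ => hd i) (by simpa using h)
  obtain ⟨V', hV', hV'S⟩ := exists_rephasing hV hz
  obtain ⟨W, hW, hWS⟩ := exists_null_ensemble_of_sum_eq_zero hV'S (by simpa using hsum)
  exact ⟨W, hW.trans hV', hWS⟩

theorem exists_optimal_flat_ensemble (hS : S.IsSymm) (hρ : ρ.PosSemidef) (htr : ρ.trace = 1) :
    ∃ (c : ℝ) (W : Matrix m (m → ℤˣ) ℂ), 0 ≤ c ∧ W * Wᴴ = ρ ∧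
      (∀ ε, ‖(Wᵀ * S * W) ε ε‖ = c * ‖(Wᴴ * W) ε ε‖) ∧
      ∀ (n : ℕ) (X : Matrix m (Fin n) ℂ), X * Xᴴ = ρ → c ≤ ∑ k, ‖(Xᵀ * S * X) k k‖ := by
  obtain ⟨V, d, rfl, hd, hV⟩ := exists_diagonal_ensemble hS hρ
  by_cases! h : ∃ i, ∑ j, d j ≤ 2 * d i
  · obtain ⟨i, hi⟩ := h
    obtain ⟨W, hW, hWS⟩ := exists_flat_ensemble_of_sum_le hV htr hi
    refine ⟨_, W, sub_nonneg.mpr hi, hW, hWS, fun n X hX => ?_⟩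
    simpa [abs_of_nonneg, hd] using two_mul_norm_sub_sum_norm_le hV hX i
  · obtain ⟨W, hW, hWS⟩ := exists_null_ensemble_of_two_mul_le_sum hd hV fun i => (h i).le
    exact ⟨0, W, le_rfl, hW, by simp [hWS], fun n X _ => Finset.sum_nonneg fun _ _ => norm_nonneg _⟩

end Optimal

section ConvexRoof

variable {m ι : Type*} [Fintype m] [Fintype ι] {ρ : Matrix m m ℂ} {p : ι → ℝ} {ψ : ι → m → ℂ}

/-- `ρ = ∑ pᵢ |ψᵢ⟩⟨ψᵢ|` is a pure-state decomposition: the weights are positive and sum to one, and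
the `ψᵢ` are unit vectors for the Hermitian inner product. -/
structure IsPureDecomposition (ρ : Matrix m m ℂ) (p : ι → ℝ) (ψ : ι → m → ℂ) : Prop where
  pos : ∀ i, 0 < p i
  sum_eq_one : ∑ i, p i = 1
  star_dotProduct_self : ∀ i, star (ψ i) ⬝ᵥ ψ i = 1
  eq_sum : ρ = ∑ i, (p i : ℂ) • vecMulVec (ψ i) (star (ψ i))

/-- The convex roof of a function `f` on pure states: the infimum over pure-state decompositions of
`ρ` of the average of `f`. It is the junk value `sInf ∅ = 0` if `ρ` is not a density matrix. -/
def convexRoof (f : (m → ℂ) → ℝ) (ρ : Matrix m m ℂ) : ℝ :=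
  sInf {t | ∃ (n : ℕ) (p : Fin n → ℝ) (ψ : Fin n → m → ℂ),
    IsPureDecomposition ρ p ψ ∧ t = ∑ i, p i * f (ψ i)}

lemma convexRoof_eq_sInf (f : (m → ℂ) → ℝ) (ρ : Matrix m m ℂ) :
    convexRoof f ρ = sInf {t | ∃ (n : ℕ) (p : Fin n → ℝ) (ψ : Fin n → m → ℂ),
      (∀ i, 0 < p i) ∧ (∑ i, p i = 1) ∧ (∀ i, star (ψ i) ⬝ᵥ ψ i = 1) ∧
      ρ = ∑ i, (p i : ℂ) • vecMulVec (ψ i) (star (ψ i)) ∧ t = ∑ i, p i * f (ψ i)} := by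
  refine congrArg sInf (Set.ext fun t => ⟨?_, ?_⟩)
  · rintro ⟨n, p, ψ, ⟨hp, hp_sum, hψ, hρ⟩, ht⟩
    exact ⟨n, p, ψ, hp, hp_sum, hψ, hρ, ht⟩
  · rintro ⟨n, p, ψ, hp, hp_sum, hψ, hρ, ht⟩
    exact ⟨n, p, ψ, ⟨hp, hp_sum, hψ, hρ⟩, ht⟩

lemma IsPureDecomposition.sum_mul_eq (h : IsPureDecomposition ρ p ψ) {f : (m → ℂ) → ℝ} {c : ℝ}
    (hf : ∀ i, f (ψ i) = c) : ∑ i, p i * f (ψ i) = c := by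
  simp only [hf, ← Finset.sum_mul, h.sum_eq_one, one_mul]

lemma IsPureDecomposition.sq_sum_mul_le (h : IsPureDecomposition ρ p ψ) {f : (m → ℂ) → ℝ}
    (hf : ∀ φ, 0 ≤ f φ) : (∑ i, p i * f (ψ i)) ^ 2 ≤ ∑ i, p i * f (ψ i) ^ 2 :=
  Real.pow_arith_mean_le_arith_mean_pow _ _ _ (fun i _ => (h.pos i).le) h.sum_eq_one
    (fun i _ => hf (ψ i)) 2

lemma IsPureDecomposition.convexRoof_eq {n : ℕ} {p : Fin n → ℝ} {ψ : Fin n → m → ℂ}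
    (h : IsPureDecomposition ρ p ψ) {f : (m → ℂ) → ℝ} {c : ℝ} (hf : ∀ i, f (ψ i) = c)
    (hc : ∀ (n : ℕ) (q : Fin n → ℝ) (φ : Fin n → m → ℂ), IsPureDecomposition ρ q φ →
      c ≤ ∑ i, q i * f (φ i)) :
    convexRoof f ρ = c := by
  refine IsLeast.csInf_eq ⟨⟨n, p, ψ, h, (h.sum_mul_eq hf).symm⟩, ?_⟩
  rintro _ ⟨n, q, φ, hφ, rfl⟩
  exact hc n q φ hφ

theorem IsPureDecomposition.convexRoof_sq_eq {n : ℕ} {p : Fin n → ℝ} {ψ : Fin n → m → ℂ}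
    (h : IsPureDecomposition ρ p ψ) {f : (m → ℂ) → ℝ} (hf₀ : ∀ φ, 0 ≤ f φ) {c : ℝ} (hc₀ : 0 ≤ c)
    (hf : ∀ i, f (ψ i) = c)
    (hc : ∀ (n : ℕ) (q : Fin n → ℝ) (φ : Fin n → m → ℂ), IsPureDecomposition ρ q φ →
      c ≤ ∑ i, q i * f (φ i)) :
    convexRoof (fun φ => f φ ^ 2) ρ = convexRoof f ρ ^ 2 := by
  rw [h.convexRoof_eq hf hc]
  refine h.convexRoof_eq (fun i => by rw [hf]) fun n q φ hφ => ?_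
  exact (pow_le_pow_left₀ hc₀ (hc n q φ hφ) 2).trans (hφ.sq_sum_mul_le hf₀)

lemma mul_conjTranspose_eq_sum_vecMulVec {m : Type*} (W : Matrix m ι ℂ) :
    W * Wᴴ = ∑ k, vecMulVec (W.col k) (star (W.col k)) := by
  ext
  simp [Matrix.mul_apply, Matrix.sum_apply, vecMulVec_apply]

lemma vecMulVec_sqrt_smul_star {m : Type*} {p : ℝ} (hp : 0 ≤ p) (w : m → ℂ) :
    vecMulVec ((√p : ℂ) • w) (star ((√p : ℂ) • w)) = (p : ℂ) • vecMulVec w (star w) := by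
  rw [star_smul, smul_vecMulVec, vecMulVec_smul, smul_smul, Complex.star_def, Complex.conj_ofReal,
    ← Complex.ofReal_mul, Real.mul_self_sqrt hp]

/-- The matrix with columns `√pᵢ ψᵢ`, encoding the ensemble of the states `ψᵢ` with weights `pᵢ`;
its Gram matrix on the left is `∑ pᵢ |ψᵢ⟩⟨ψᵢ|`. -/
def ensembleMatrix {m ι : Type*} (p : ι → ℝ) (ψ : ι → m → ℂ) : Matrix m ι ℂ :=
  of fun a i => √(p i) * ψ i a

lemma col_ensembleMatrix {m ι : Type*} (p : ι → ℝ) (ψ : ι → m → ℂ) (i : ι) :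
    (ensembleMatrix p ψ).col i = (√(p i) : ℂ) • ψ i :=
  rfl

lemma IsPureDecomposition.ensembleMatrix_mul_conjTranspose (h : IsPureDecomposition ρ p ψ) :
    ensembleMatrix p ψ * (ensembleMatrix p ψ)ᴴ = ρ := by
  rw [mul_conjTranspose_eq_sum_vecMulVec, h.eq_sum]
  simp only [col_ensembleMatrix, vecMulVec_sqrt_smul_star (h.pos _).le]

lemma IsPureDecomposition.comp_equiv {κ : Type*} [Fintype κ] (h : IsPureDecomposition ρ p ψ)
    (e : κ ≃ ι) : IsPureDecomposition ρ (p ∘ e) (ψ ∘ e) where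
  pos i := h.pos (e i)
  sum_eq_one := (e.sum_comp p).trans h.sum_eq_one
  star_dotProduct_self i := h.star_dotProduct_self (e i)
  eq_sum := h.eq_sum.trans (e.sum_comp fun i => (p i : ℂ) • vecMulVec (ψ i) (star (ψ i))).symm

lemma exists_eq_sqrt_smul_unit {w : m → ℂ} (hw : w ≠ 0) :
    ∃ (p : ℝ) (ψ : m → ℂ), 0 < p ∧ star ψ ⬝ᵥ ψ = 1 ∧ w = (√p : ℂ) • ψ := by
  let p : ℝ := ∑ a, ‖w a‖ ^ 2
  have hpw : star w ⬝ᵥ w = (p : ℂ) := by simp [p, dotProduct, Complex.conj_mul']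
  have hp : 0 < p := by exact_mod_cast hpw ▸ dotProduct_star_self_pos_iff.mpr hw
  have hp' : (√p : ℂ) ≠ 0 := by exact_mod_cast (Real.sqrt_pos.mpr hp).ne'
  refine ⟨p, (√p : ℂ)⁻¹ • w, hp, ?_, (smul_inv_smul₀ hp' w).symm⟩
  rw [star_smul, smul_dotProduct, dotProduct_smul, hpw, star_inv₀, Complex.star_def,
    Complex.conj_ofReal, smul_smul, smul_eq_mul, ← mul_inv, ← Complex.ofReal_mul,
    Real.mul_self_sqrt hp.le, inv_mul_cancel₀ (by exact_mod_cast hp.ne')]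

lemma exists_isPureDecomposition {W : Matrix m ι ℂ} (htr : (W * Wᴴ).trace = 1) :
    ∃ (n : ℕ) (p : Fin n → ℝ) (ψ : Fin n → m → ℂ), IsPureDecomposition (W * Wᴴ) p ψ ∧
      ∀ i, ∃ k, W.col k = (√(p i) : ℂ) • ψ i := by
  classical
  choose p ψ hp hψ hcol using fun k : {k // W.col k ≠ 0} => exists_eq_sqrt_smul_unit k.2
  have hsum : W * Wᴴ = ∑ k, (p k : ℂ) • vecMulVec (ψ k) (star (ψ k)) := by
    rw [mul_conjTranspose_eq_sum_vecMulVec, eq_comm]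
    refine Fintype.sum_of_injective _ Subtype.val_injective _ _ (fun k hk => ?_) fun k => ?_
    · rw [show W.col k = 0 by simpa using hk, zero_vecMulVec]
    · rw [hcol k, vecMulVec_sqrt_smul_star (hp k).le]
  have hp_sum : ∑ k, p k = 1 := by
    simp only [hsum, trace_sum, trace_smul, trace_vecMulVec, dotProduct_comm (ψ _), hψ, smul_eq_mul,
      mul_one] at htr
    exact_mod_cast htr
  let e := (Fintype.equivFin {k // W.col k ≠ 0}).symm
  exact ⟨_, _, _, IsPureDecomposition.comp_equiv ⟨hp, hp_sum, hψ, hsum⟩ e,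
    fun i => ⟨e i, hcol (e i)⟩⟩

end ConvexRoof

section QuadraticForm

variable {m : Type*} [Fintype m] {ρ : Matrix m m ℂ}

lemma transpose_mul_mul_apply_self {k : Type*} (S : Matrix m m ℂ) (W : Matrix m k ℂ) (l : k) :
    (Wᵀ * S * W) l l = W.col l ⬝ᵥ S *ᵥ W.col l := by
  rw [Matrix.mul_assoc]
  rfl

lemma conjTranspose_mul_self_apply_self {k : Type*} (W : Matrix m k ℂ) (l : k) :
    (Wᴴ * W) l l = star (W.col l) ⬝ᵥ W.col l :=
  rfl

lemma norm_star_sqrt_smul_dotProduct {p : ℝ} (hp : 0 ≤ p) (w : m → ℂ) :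
    ‖star ((√p : ℂ) • w) ⬝ᵥ ((√p : ℂ) • w)‖ = p * ‖star w ⬝ᵥ w‖ := by
  rw [star_smul, smul_dotProduct, dotProduct_smul, smul_smul, Complex.star_def, Complex.conj_ofReal,
    ← Complex.ofReal_mul, Real.mul_self_sqrt hp, norm_smul, Complex.norm_real,
    Real.norm_of_nonneg hp]

lemma norm_sqrt_smul_dotProduct_mulVec {p : ℝ} (hp : 0 ≤ p) (S : Matrix m m ℂ) (w : m → ℂ) :
    ‖((√p : ℂ) • w) ⬝ᵥ S *ᵥ ((√p : ℂ) • w)‖ = p * ‖w ⬝ᵥ S *ᵥ w‖ := by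
  rw [mulVec_smul, smul_dotProduct, dotProduct_smul, smul_smul, ← Complex.ofReal_mul,
    Real.mul_self_sqrt hp, norm_smul, Complex.norm_real, Real.norm_of_nonneg hp]

lemma IsPureDecomposition.sum_norm_ensembleMatrix_eq {ι : Type*} [Fintype ι] {p : ι → ℝ}
    {ψ : ι → m → ℂ} (h : IsPureDecomposition ρ p ψ) (S : Matrix m m ℂ) :
    ∑ i, ‖((ensembleMatrix p ψ)ᵀ * S * ensembleMatrix p ψ) i i‖ =
      ∑ i, p i * ‖ψ i ⬝ᵥ S *ᵥ ψ i‖ := by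
  simp only [transpose_mul_mul_apply_self, col_ensembleMatrix,
    norm_sqrt_smul_dotProduct_mulVec (h.pos _).le]

end QuadraticForm

theorem itangle_eq_sq_concurrence_two_qubits_general {m : Type*} [Fintype m] [DecidableEq m]
    {S ρ : Matrix m m ℂ} (hS : S.IsSymm) (hρ : IsDensityMatrix ρ) :
    convexRoof (fun ψ => ‖ψ ⬝ᵥ S *ᵥ ψ‖ ^ 2) ρ = convexRoof (fun ψ => ‖ψ ⬝ᵥ S *ᵥ ψ‖) ρ ^ 2 := by
  obtain ⟨c, W, hc, rfl, hflat, hopt⟩ := exists_optimal_flat_ensemble hS hρ.1 hρ.2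
  obtain ⟨n, p, ψ, h, hcol⟩ := exists_isPureDecomposition hρ.2
  refine h.convexRoof_sq_eq (fun _ => norm_nonneg _) hc (fun i => ?_) fun n q φ hφ => ?_
  · obtain ⟨k, hk⟩ := hcol i
    have hflat_k := hflat k
    rw [transpose_mul_mul_apply_self, conjTranspose_mul_self_apply_self, hk,
      norm_sqrt_smul_dotProduct_mulVec (h.pos i).le, norm_star_sqrt_smul_dotProduct (h.pos i).le,
      h.star_dotProduct_self, norm_one, mul_one, mul_comm] at hflat_k
    exact mul_right_cancel₀ (h.pos i).ne' hflat_k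
  · rw [← hφ.sum_norm_ensembleMatrix_eq]
    exact hopt n _ hφ.ensembleMatrix_mul_conjTranspose

section TwoQubits

/-- The matrix `-(σ_y ⊗ σ_y)` of Wootters' spin flip `ψ ↦ (σ_y ⊗ σ_y) ψ*`, with the sign chosen to
keep the entries of the tensor factors real. -/
def spinFlip : Matrix (Fin 2 × Fin 2) (Fin 2 × Fin 2) ℂ :=
  !![0, 1; -1, 0] ⊗ₖ !![0, 1; -1, 0]

lemma spinFlip_isSymm : spinFlip.IsSymm := by
  ext ⟨i, j⟩ ⟨i', j'⟩
  fin_cases i <;> fin_cases j <;> fin_cases i' <;> fin_cases j' <;> simp [spinFlip]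

lemma spinFlip_isHermitian : spinFlip.IsHermitian := by
  ext ⟨i, j⟩ ⟨i', j'⟩
  fin_cases i <;> fin_cases j <;> fin_cases i' <;> fin_cases j' <;> simp [spinFlip]

lemma inverter_outer (ψ : Fin 2 × Fin 2 → ℂ) :
    inverter (outer ψ) = outer (spinFlip *ᵥ star ψ) := by
  ext ⟨i, j⟩ ⟨i', j'⟩
  fin_cases i <;> fin_cases j <;> fin_cases i' <;> fin_cases j' <;>
    simp [inverter, outer, ptraceA, ptraceB, Matrix.trace, mulVec, dotProduct, vecMulVec_apply,
      Fintype.sum_prod_type, spinFlip] <;> ring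

lemma pureTangle_eq_sq (ψ : Fin 2 × Fin 2 → ℂ) : pureTangle ψ = ‖ψ ⬝ᵥ spinFlip *ᵥ ψ‖ ^ 2 := by
  have hleft : star (spinFlip *ᵥ star ψ) ⬝ᵥ ψ = ψ ⬝ᵥ spinFlip *ᵥ ψ := by
    rw [star_mulVec, star_star, spinFlip_isHermitian.eq, dotProduct_mulVec]
  have hright : star ψ ⬝ᵥ spinFlip *ᵥ star ψ = star (ψ ⬝ᵥ spinFlip *ᵥ ψ) := by
    rw [star_dotProduct, hleft]
  rw [pureTangle, inverter_outer, outer, vecMulVec_mulVec, hleft, op_smul_eq_smul,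
    dotProduct_smul, hright, smul_eq_mul, Complex.star_def, Complex.mul_conj', ← Complex.ofReal_pow,
    Complex.ofReal_re]

lemma itangle_eq_convexRoof {dA dB : ℕ} (ρ : Matrix (Fin dA × Fin dB) (Fin dA × Fin dB) ℂ) :
    Itangle ρ = convexRoof pureTangle ρ :=
  (convexRoof_eq_sInf _ ρ).symm

lemma iconcurrence_eq_convexRoof {dA dB : ℕ}
    (ρ : Matrix (Fin dA × Fin dB) (Fin dA × Fin dB) ℂ) :
    Iconcurrence ρ = convexRoof (fun ψ => √(pureTangle ψ)) ρ :=
  (convexRoof_eq_sInf (fun ψ => √(pureTangle ψ)) ρ).symm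

end TwoQubits

/-- For a pair of qubits, the I-tangle equals the square of the I-concurrence. -/
theorem itangle_eq_sq_concurrence_two_qubits
    (ρ : Matrix (Fin 2 × Fin 2) (Fin 2 × Fin 2) ℂ) (hρ : IsDensityMatrix ρ) :
    Itangle ρ = Iconcurrence ρ ^ 2 := by
  simpa [itangle_eq_convexRoof, iconcurrence_eq_convexRoof, funext pureTangle_eq_sq] using
    itangle_eq_sq_concurrence_two_qubits_general spinFlip_isSymm hρ
end
end

section
/- Let ρ be a density matrix on ℂ^{dA} ⊗ ℂ^{dB} of rank at most 2. Then the infimum defining the I-tangle is attained by a decomposition into at most two pure states: there exist q ∈ [0,1] and unit vectors φ1, φ2 with ρ = q|φ1⟩⟨φ1| + (1−q)|φ2⟩⟨φ2| and τ(ρ) = q ⟨φ1| ρ̃_1 |φ1⟩ + (1−q) ⟨φ2| ρ̃_2 |φ2⟩, where ρ_k = |φ_k⟩⟨φ_k|. -/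
open Matrix Kronecker
open scoped ComplexOrder

noncomputable section

/-!
The pure-state tangle is the restriction of a real quadratic form `Q` to the projectors `|ψ⟩⟨ψ|`.
The vectors of any pure-state decomposition of `ρ` lie in the range of `ρ`, so for rank two the pure
states that can occur form a Bloch sphere, on which `Q` becomes a quadratic polynomial. For points
`wᵢ` of a sphere of radius `R` with weights `pᵢ` and barycenter `x`, the linear terms cancel:
`∑ pᵢ Q(wᵢ) = Q(x) + ∑ pᵢ Q(wᵢ - x) ≥ Q(x) + l ∑ pᵢ ‖wᵢ - x‖² = Q(x) + l (R² - ‖x‖²)`,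
where `l` is the minimum of the homogeneous part of `Q` over unit directions. Equality holds for the
two points in which the line through `x` in a minimizing direction meets the sphere.
-/

section ConvexDecomposition

variable {E M : Type*} [AddCommGroup E] [Module ℝ E] [AddCommGroup M] [Module ℝ M]

/-- A finite decomposition `x = ∑ i, p i • w i` into points `w i` of `S` with positive weights `p i`
of total mass one. The points are allowed to coincide. -/
structure IsConvexDecomposition {ι : Type*} [Fintype ι] (S : Set M) (x : M) (p : ι → ℝ)
    (w : ι → M) : Prop where
  weight_pos : ∀ i, 0 < p i
  sum_weight : ∑ i, p i = 1
  mem : ∀ i, w i ∈ S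
  sum_smul : ∑ i, p i • w i = x

/-- The convex roof of `f` on `S` at `x`, that is, the infimum of `∑ i, p i * f (w i)` over the
decompositions of `x` into points of `S`, is attained by a decomposition into two points. -/
def HasTwoPointRoof (f : M → ℝ) (S : Set M) (x : M) : Prop :=
  ∃ (q : Fin 2 → ℝ) (u : Fin 2 → M), IsConvexDecomposition S x q u ∧
    ∀ (m : ℕ) (p : Fin m → ℝ) (w : Fin m → M), IsConvexDecomposition S x p w →
      ∑ k, q k * f (u k) ≤ ∑ i, p i * f (w i)

theorem isConvexDecomposition_const {S : Set M} {x : M} (hx : x ∈ S) :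
    IsConvexDecomposition S x (fun _ : Fin 2 ↦ 1 / 2) fun _ ↦ x where
  weight_pos _ := by norm_num
  sum_weight := by norm_num
  mem _ := hx
  sum_smul := by rw [Fin.sum_univ_two]; module

theorem hasTwoPointRoof_singleton (f : M → ℝ) (x : M) : HasTwoPointRoof f {x} x := by
  refine ⟨_, _, isConvexDecomposition_const rfl, fun m p w h ↦ le_of_eq ?_⟩
  have hw : ∀ i, w i = x := h.mem
  simp only [hw, ← Finset.sum_mul, h.sum_weight,
    (isConvexDecomposition_const (Set.mem_singleton x)).sum_weight]

namespace IsConvexDecomposition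

variable {ι : Type*} [Fintype ι] {S T : Set E} {x : E} {p : ι → ℝ} {w : ι → E}

theorem of_forall_mem (h : IsConvexDecomposition S x p w) (hT : ∀ i, w i ∈ T) :
    IsConvexDecomposition T x p w :=
  { h with mem := hT }

theorem sum_smul_sub_eq_zero (h : IsConvexDecomposition S x p w) :
    ∑ i, p i • (w i - x) = 0 := by
  simp only [smul_sub, Finset.sum_sub_distrib, ← Finset.sum_smul, h.sum_weight, h.sum_smul,
    one_smul, sub_self]

theorem sum_smul_affineMap (h : IsConvexDecomposition S x p w) (A : E →ᵃ[ℝ] M) :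
    ∑ i, p i • A (w i) = A x := by
  have apply_point (i : ι) : A (w i) = A x + A.linear (w i - x) := by
    rw [← vsub_eq_sub, AffineMap.linearMap_vsub, vsub_eq_sub, add_sub_cancel]
  simp only [apply_point, smul_add, Finset.sum_add_distrib, ← Finset.sum_smul, h.sum_weight,
    one_smul, ← map_smul, ← map_sum, h.sum_smul_sub_eq_zero, map_zero, add_zero]

theorem map (h : IsConvexDecomposition S x p w) (A : E →ᵃ[ℝ] M) :
    IsConvexDecomposition (A '' S) (A x) p (A ∘ w) where
  weight_pos := h.weight_pos
  sum_weight := h.sum_weight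
  mem i := Set.mem_image_of_mem A (h.mem i)
  sum_smul := h.sum_smul_affineMap A

theorem exists_eq_comp_of_image {A : E →ᵃ[ℝ] M} (hA : Function.Injective A) {y : ι → M}
    (h : IsConvexDecomposition (A '' S) (A x) p y) :
    ∃ w : ι → E, IsConvexDecomposition S x p w ∧ y = A ∘ w := by
  choose w hwS hwy using h.mem
  obtain rfl : y = A ∘ w := funext fun i ↦ (hwy i).symm
  have hw : IsConvexDecomposition S (∑ i, p i • w i) p w := ⟨h.weight_pos, h.sum_weight, hwS, rfl⟩
  have barycenter_eq : ∑ i, p i • w i = x :=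
    hA ((hw.sum_smul_affineMap A).symm.trans h.sum_smul)
  exact ⟨w, barycenter_eq ▸ hw, rfl⟩

theorem sum_mul_quadraticForm (h : IsConvexDecomposition S x p w) (Q : QuadraticForm ℝ M)
    (A : E →ᵃ[ℝ] M) :
    ∑ i, p i * Q (A (w i)) = Q (A x) + ∑ i, p i * Q (A.linear (w i - x)) := by
  have expand (i : ι) : Q (A (w i)) =
      Q (A x) + Q (A.linear (w i - x)) + Q.polarBilin (A x) (A.linear (w i - x)) := by
    rw [QuadraticMap.polarBilin_apply_apply, ← QuadraticMap.map_add, ← vsub_eq_sub,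
      AffineMap.linearMap_vsub, vsub_eq_sub, add_sub_cancel]
  have cross_terms : ∑ i, p i * Q.polarBilin (A x) (A.linear (w i - x)) = 0 := by
    simp only [← smul_eq_mul, ← map_smul, ← map_sum, h.sum_smul_sub_eq_zero, map_zero]
  simp only [expand, mul_add, Finset.sum_add_distrib, ← Finset.sum_mul, h.sum_weight, one_mul,
    cross_terms, add_zero]

end IsConvexDecomposition

namespace HasTwoPointRoof

theorem image {f : M → ℝ} {S : Set E} {x : E} {A : E →ᵃ[ℝ] M} (hA : Function.Injective A)
    (h : HasTwoPointRoof (f ∘ A) S x) : HasTwoPointRoof f (A '' S) (A x) := by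
  obtain ⟨q, u, hu, hmin⟩ := h
  refine ⟨q, A ∘ u, hu.map A, fun m p y hy ↦ ?_⟩
  obtain ⟨w, hw, rfl⟩ := hy.exists_eq_comp_of_image hA
  exact hmin m p w hw

theorem of_face {f : M → ℝ} {S T : Set M} {x : M} (h : HasTwoPointRoof f T x) (hTS : T ⊆ S)
    (hface : ∀ (m : ℕ) (p : Fin m → ℝ) (w : Fin m → M),
      IsConvexDecomposition S x p w → ∀ i, w i ∈ T) :
    HasTwoPointRoof f S x := by
  obtain ⟨q, u, hu, hmin⟩ := h
  exact ⟨q, u, hu.of_forall_mem fun k ↦ hTS (hu.mem k),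
    fun m p w hw ↦ hmin m p w (hw.of_forall_mem (hface m p w hw))⟩

end HasTwoPointRoof

end ConvexDecomposition

section Sphere

open Metric

theorem exists_pos_norm_add_smul_eq {E : Type*} [NormedAddCommGroup E] [NormedSpace ℝ E] {x v : E}
    {R : ℝ} (hx : ‖x‖ < R) (hv : v ≠ 0) : ∃ t : ℝ, 0 < t ∧ ‖x + t • v‖ = R := by
  have hv' : 0 < ‖v‖ := norm_pos_iff.2 hv
  have hT : 0 ≤ (R + ‖x‖) / ‖v‖ := div_nonneg (by linarith [norm_nonneg x]) hv'.le
  have far : R ≤ ‖x + ((R + ‖x‖) / ‖v‖) • v‖ := by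
    have := norm_sub_norm_le (((R + ‖x‖) / ‖v‖) • v) (-x)
    rw [norm_smul, Real.norm_of_nonneg hT, div_mul_cancel₀ _ hv'.ne', norm_neg, sub_neg_eq_add,
      add_comm _ x] at this
    linarith
  obtain ⟨t, ht, htR⟩ := intermediate_value_Icc (f := fun t : ℝ ↦ ‖x + t • v‖) hT
    (by fun_prop) ⟨by simpa using hx.le, far⟩
  refine ⟨t, ht.1.lt_of_ne ?_, htR⟩
  rintro rfl
  exact hx.ne (by simpa using htR)

theorem exists_isConvexDecomposition_sphere_along {E : Type*} [NormedAddCommGroup E]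
    [NormedSpace ℝ E] {x v : E} {R : ℝ} (hx : ‖x‖ ≤ R) (hv : v ≠ 0) :
    ∃ (q : Fin 2 → ℝ) (u : Fin 2 → E), IsConvexDecomposition (sphere 0 R) x q u ∧
      ∀ k, ∃ t : ℝ, u k - x = t • v := by
  rcases hx.eq_or_lt with hx | hx
  · exact ⟨_, _, isConvexDecomposition_const (mem_sphere_zero_iff_norm.2 hx),
      fun _ ↦ ⟨0, by simp⟩⟩
  obtain ⟨t, ht, htR⟩ := exists_pos_norm_add_smul_eq hx hv
  obtain ⟨s, hs, hsR⟩ := exists_pos_norm_add_smul_eq hx (neg_ne_zero.2 hv)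
  have barycenter : (s / (s + t)) • (x + t • v) + (t / (s + t)) • (x + s • -v) = x := by
    match_scalars <;> field_simp
    ring
  refine ⟨![s / (s + t), t / (s + t)], ![x + t • v, x + s • -v], ⟨?_, ?_, ?_, ?_⟩, ?_⟩
  · simp only [Fin.forall_fin_two, cons_val_zero, cons_val_one]
    exact ⟨by positivity, by positivity⟩
  · simp only [Fin.sum_univ_two, cons_val_zero, cons_val_one]
    field_simp
  · simpa only [Fin.forall_fin_two, mem_sphere_zero_iff_norm] using ⟨htR, hsR⟩
  · rw [Fin.sum_univ_two]
    exact barycenter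
  · simp only [Fin.forall_fin_two, cons_val_zero, cons_val_one, add_sub_cancel_left]
    exact ⟨⟨t, rfl⟩, ⟨-s, by module⟩⟩

variable {E : Type*} [NormedAddCommGroup E] [InnerProductSpace ℝ E]

theorem IsConvexDecomposition.sum_mul_norm_sub_sq {ι : Type*} [Fintype ι] {R : ℝ} {x : E}
    {p : ι → ℝ} {w : ι → E} (h : IsConvexDecomposition (sphere 0 R) x p w) :
    ∑ i, p i * ‖w i - x‖ ^ 2 = R ^ 2 - ‖x‖ ^ 2 := by
  have hw (i : ι) : ‖w i‖ = R := mem_sphere_zero_iff_norm.1 (h.mem i)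
  have parallel_axis := h.sum_mul_quadraticForm
    (LinearMap.BilinMap.toQuadraticMap (innerₗ E)) (AffineMap.id ℝ E)
  simp only [LinearMap.BilinMap.toQuadraticMap_apply, innerₗ_apply_apply, AffineMap.id_apply,
    AffineMap.id_linear, LinearMap.id_apply, real_inner_self_eq_norm_sq, hw, ← Finset.sum_mul,
    h.sum_weight, one_mul] at parallel_axis
  linarith

theorem continuous_quadraticForm {F : Type*} [NormedAddCommGroup F] [NormedSpace ℝ F]
    [FiniteDimensional ℝ F] (Q : QuadraticForm ℝ F) : Continuous Q := by
  obtain ⟨B, rfl⟩ := LinearMap.BilinMap.toQuadraticMap_surjective Q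
  have : Continuous fun x : F ↦ B.toContinuousBilinearMap x x := by fun_prop
  exact this

variable [FiniteDimensional ℝ E] [Nontrivial E]

theorem exists_norm_eq_one_forall_mul_norm_sq_le (Q : QuadraticForm ℝ E) :
    ∃ v : E, ‖v‖ = 1 ∧ ∀ x, Q v * ‖x‖ ^ 2 ≤ Q x := by
  obtain ⟨v, hv, hmin⟩ := (isCompact_sphere (0 : E) 1).exists_isMinOn
    (NormedSpace.sphere_nonempty.2 zero_le_one) (continuous_quadraticForm Q).continuousOn
  refine ⟨v, mem_sphere_zero_iff_norm.1 hv, fun x ↦ ?_⟩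
  rcases eq_or_ne x 0 with rfl | hx
  · simp
  have normalized : Q v ≤ Q (‖x‖⁻¹ • x) :=
    hmin (mem_sphere_zero_iff_norm.2 (norm_smul_inv_norm (𝕜 := ℝ) hx))
  rw [QuadraticMap.map_smul, smul_eq_mul] at normalized
  have hx' : ‖x‖ ≠ 0 := norm_ne_zero_iff.2 hx
  calc Q v * ‖x‖ ^ 2 ≤ ‖x‖⁻¹ * ‖x‖⁻¹ * Q x * ‖x‖ ^ 2 := by gcongr
    _ = Q x := by field_simp

theorem hasTwoPointRoof_sphere {M : Type*} [AddCommGroup M] [Module ℝ M] (Q : QuadraticForm ℝ M)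
    (A : E →ᵃ[ℝ] M) {R : ℝ} {x : E} (hx : ‖x‖ ≤ R) :
    HasTwoPointRoof (Q ∘ A) (sphere 0 R) x := by
  obtain ⟨v, hv, hmin⟩ := exists_norm_eq_one_forall_mul_norm_sq_le (Q.comp A.linear)
  simp only [QuadraticMap.comp_apply] at hmin
  obtain ⟨q, u, hu, along⟩ := exists_isConvexDecomposition_sphere_along hx
    (norm_ne_zero_iff.1 (hv ▸ one_ne_zero))
  have eq_along (k : Fin 2) : Q (A.linear (u k - x)) = Q (A.linear v) * ‖u k - x‖ ^ 2 := by
    obtain ⟨t, ht⟩ := along k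
    rw [ht, map_smul, QuadraticMap.map_smul, norm_smul, hv, mul_one, Real.norm_eq_abs, sq_abs,
      smul_eq_mul, ← sq, mul_comm]
  refine ⟨q, u, hu, fun m p w hw ↦ ?_⟩
  calc ∑ k, q k * Q (A (u k))
      = Q (A x) + Q (A.linear v) * ∑ k, q k * ‖u k - x‖ ^ 2 := by
        simp only [hu.sum_mul_quadraticForm, eq_along, Finset.mul_sum, mul_left_comm]
    _ = Q (A x) + Q (A.linear v) * ∑ i, p i * ‖w i - x‖ ^ 2 := by
        rw [hu.sum_mul_norm_sub_sq, hw.sum_mul_norm_sub_sq]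
    _ ≤ Q (A x) + ∑ i, p i * Q (A.linear (w i - x)) := by
        simp only [Finset.mul_sum, mul_left_comm (Q (A.linear v))]
        gcongr with i
        exacts [(hw.weight_pos i).le, hmin _]
    _ = ∑ i, p i * Q (A (w i)) := (hw.sum_mul_quadraticForm Q A).symm

end Sphere

section PureStates

variable {n m : Type*}

/-- The rank-one matrix `|ψ⟩⟨ψ|`; `outer` is the case of a product index type. -/
def ketBra (ψ : n → ℂ) : Matrix n n ℂ :=
  vecMulVec ψ (star ψ)

/-- The rank-one projectors `|ψ⟩⟨ψ|` onto unit vectors. -/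
def pureStates (n : Type*) [Fintype n] : Set (Matrix n n ℂ) :=
  {X | ∃ ψ : n → ℂ, star ψ ⬝ᵥ ψ = 1 ∧ ketBra ψ = X}

theorem trace_ketBra [Fintype n] (ψ : n → ℂ) : (ketBra ψ).trace = star ψ ⬝ᵥ ψ := by
  rw [ketBra, trace_vecMulVec, dotProduct_comm]

theorem ketBra_mem_pureStates_iff [Fintype n] {ψ : n → ℂ} :
    ketBra ψ ∈ pureStates n ↔ star ψ ⬝ᵥ ψ = 1 := by
  refine ⟨?_, fun hψ ↦ ⟨ψ, hψ, rfl⟩⟩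
  rintro ⟨φ, hφ, hφψ⟩
  rw [← trace_ketBra, ← hφψ, trace_ketBra, hφ]

theorem ketBra_mulVec [Fintype m] (W : Matrix n m ℂ) (c : m → ℂ) :
    ketBra (W *ᵥ c) = W * ketBra c * Wᴴ := by
  rw [ketBra, ketBra, mul_vecMulVec, vecMulVec_mul, star_mulVec]

variable [Fintype n] [Fintype m]

theorem mulVec_eq_zero_of_mul_sum_ketBra_eq_zero {ι l : Type*} [Fintype ι] {p : ι → ℝ}
    (hp : ∀ i, 0 < p i) {ψ : ι → n → ℂ} {L : Matrix l n ℂ}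
    (h : L * ∑ i, p i • ketBra (ψ i) = 0) (i : ι) : L *ᵥ ψ i = 0 := by
  have sum_eq_zero : ∑ i, p i • ketBra (L *ᵥ ψ i) = 0 := by
    simp only [ketBra_mulVec, ← Matrix.smul_mul, ← Matrix.sum_mul]
    simp only [Matrix.smul_mul, ← Matrix.mul_smul, ← Matrix.mul_sum, h, Matrix.zero_mul]
  ext a
  have diag_eq_zero : ∑ i, p i • ((L *ᵥ ψ i) a * star ((L *ᵥ ψ i) a)) = 0 := by
    simpa only [Matrix.sum_apply, Matrix.smul_apply] using! congrFun₂ sum_eq_zero a a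
  have nonneg (i : ι) : 0 ≤ p i • ((L *ᵥ ψ i) a * star ((L *ᵥ ψ i) a)) :=
    smul_nonneg (hp i).le (mul_star_self_nonneg _)
  have := (Finset.sum_eq_zero_iff_of_nonneg fun i _ ↦ nonneg i).1 diag_eq_zero i
    (Finset.mem_univ i)
  exact (CStarRing.mul_star_self_eq_zero_iff _).1 ((smul_eq_zero.1 this).resolve_left (hp i).ne')

theorem star_mulVec_dotProduct_mulVec_of_isometry [DecidableEq m] {W : Matrix n m ℂ}
    (hW : Wᴴ * W = 1) (c : m → ℂ) : star (W *ᵥ c) ⬝ᵥ W *ᵥ c = star c ⬝ᵥ c := by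
  rw [star_mulVec, ← dotProduct_mulVec, mulVec_mulVec, hW, one_mulVec]

end PureStates

section Compression

variable {n m : Type*} [Fintype m]

theorem exists_isometry_mul_conjTranspose_mul_eq {𝕜 : Type*} [RCLike 𝕜] [Fintype n]
    (A : Matrix n m 𝕜) :
    ∃ W : Matrix n (Fin A.rank) 𝕜, Wᴴ * W = 1 ∧ W * Wᴴ * A = A := by
  classical
  let V := LinearMap.range A.toEuclideanLin
  have finrank_eq : Module.finrank 𝕜 V = A.rank := by
    rw [A.rank_eq_finrank_range_toLin (PiLp.basisFun 2 𝕜 n) (PiLp.basisFun 2 𝕜 m),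
      ← toLpLin_eq_toLin]
  let b : OrthonormalBasis (Fin A.rank) 𝕜 V :=
    (stdOrthonormalBasis 𝕜 V).reindex (finCongr finrank_eq)
  let W : Matrix n (Fin A.rank) 𝕜 := of fun i k ↦ (b k : EuclideanSpace 𝕜 n) i
  refine ⟨W, ?_, ?_⟩
  · ext k l
    have := orthonormal_iff_ite.1 b.orthonormal k l
    rw [Submodule.coe_inner, EuclideanSpace.inner_eq_star_dotProduct, dotProduct_comm] at this
    rw [one_apply, ← this]
    rfl
  · ext i j
    have expansion := congrArg (fun v : V ↦ (v : EuclideanSpace 𝕜 n) i)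
      (b.sum_repr' ⟨A.toEuclideanLin (EuclideanSpace.single j 1), LinearMap.mem_range_self _ _⟩)
    rw [Matrix.mul_assoc, mul_apply]
    simpa [W, mul_apply, Submodule.coe_inner, EuclideanSpace.inner_eq_star_dotProduct, dotProduct,
      mul_comm] using expansion

/-- The real-linear map `X ↦ W * X * Wᴴ`. For an isometry `W` it embeds the matrices on the smaller
space as those supported on the range of `W`, and `conjugation Wᴴ` is the compression back. -/
def conjugation (W : Matrix n m ℂ) : Matrix m m ℂ →ₗ[ℝ] Matrix n n ℂ :=
  mulRightLinearMap n ℝ Wᴴ ∘ₗ mulLeftLinearMap m ℝ W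

theorem conjugation_apply (W : Matrix n m ℂ) (X : Matrix m m ℂ) :
    conjugation W X = W * X * Wᴴ :=
  rfl

variable [Fintype n] {W : Matrix n m ℂ}

theorem conjugation_conjugation_conjTranspose {ρ : Matrix n n ℂ} (hρ : ρ.IsHermitian)
    (hWρ : W * Wᴴ * ρ = ρ) : conjugation W (conjugation Wᴴ ρ) = ρ := by
  have hρW : ρ * (W * Wᴴ) = ρ := by
    simpa only [conjTranspose_mul, conjTranspose_conjTranspose, hρ.eq] using congrArg (·ᴴ) hWρ
  simp only [conjugation_apply, conjTranspose_conjTranspose]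
  calc W * (Wᴴ * ρ * W) * Wᴴ = W * Wᴴ * ρ * (W * Wᴴ) := by simp only [Matrix.mul_assoc]
    _ = ρ := by rw [hWρ, hρW]

theorem trace_conjugation_conjTranspose {X : Matrix n n ℂ} (hWX : W * Wᴴ * X = X) :
    (conjugation Wᴴ X).trace = X.trace := by
  rw [conjugation_apply, conjTranspose_conjTranspose, trace_mul_comm, ← Matrix.mul_assoc, hWX]

theorem isDensityMatrix_conjugation_conjTranspose [DecidableEq n] [DecidableEq m]
    {ρ : Matrix n n ℂ} (hρ : IsDensityMatrix ρ) (hWρ : W * Wᴴ * ρ = ρ) :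
    IsDensityMatrix (conjugation Wᴴ ρ) := by
  refine ⟨?_, (trace_conjugation_conjTranspose hWρ).trans hρ.2⟩
  rw [conjugation_apply, conjTranspose_conjTranspose]
  exact hρ.1.conjTranspose_mul_mul_same W

variable [DecidableEq m]

theorem conjugation_injective (hW : Wᴴ * W = 1) : Function.Injective (conjugation W) := by
  refine Function.LeftInverse.injective (g := conjugation Wᴴ) fun X ↦ ?_
  rw [conjugation_apply, conjugation_apply, conjTranspose_conjTranspose, Matrix.mul_assoc,
    Matrix.mul_assoc _ _ W, hW, Matrix.mul_one, ← Matrix.mul_assoc, hW, Matrix.one_mul]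

theorem conjugation_image_pureStates_subset (hW : Wᴴ * W = 1) :
    conjugation W '' pureStates m ⊆ pureStates n := by
  rintro _ ⟨_, ⟨c, hc, rfl⟩, rfl⟩
  exact ⟨W *ᵥ c, by rw [star_mulVec_dotProduct_mulVec_of_isometry hW, hc], ketBra_mulVec W c⟩

theorem IsConvexDecomposition.mem_conjugation_image_pureStates {ι : Type*} [Fintype ι]
    {ρ : Matrix n n ℂ} (hW : Wᴴ * W = 1) (hρ : W * Wᴴ * ρ = ρ) {p : ι → ℝ}
    {X : ι → Matrix n n ℂ} (h : IsConvexDecomposition (pureStates n) ρ p X) (i : ι) :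
    X i ∈ conjugation W '' pureStates m := by
  classical
  choose ψ hψ hX using h.mem
  obtain rfl : (fun i ↦ ketBra (ψ i)) = X := funext hX
  have orthogonal_part : (1 - W * Wᴴ) *ᵥ ψ i = 0 := by
    refine mulVec_eq_zero_of_mul_sum_ketBra_eq_zero h.weight_pos ?_ i
    rw [h.sum_smul, Matrix.sub_mul, Matrix.one_mul, hρ, sub_self]
  have hψW : W *ᵥ (Wᴴ *ᵥ ψ i) = ψ i := by
    rw [mulVec_mulVec]
    simpa only [sub_mulVec, one_mulVec, sub_eq_zero, eq_comm] using orthogonal_part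
  refine ⟨ketBra (Wᴴ *ᵥ ψ i), ⟨_, ?_, rfl⟩, ?_⟩
  · rw [← star_mulVec_dotProduct_mulVec_of_isometry hW, hψW, hψ]
  · rw [conjugation_apply, ← ketBra_mulVec, hψW]

theorem hasTwoPointRoof_pureStates_conjugation (hW : Wᴴ * W = 1)
    {f : Matrix n n ℂ → ℝ} {σ : Matrix m m ℂ}
    (h : HasTwoPointRoof (f ∘ conjugation W) (pureStates m) σ) :
    HasTwoPointRoof f (pureStates n) (conjugation W σ) := by
  refine HasTwoPointRoof.of_face (h.image (A := (conjugation W).toAffineMap)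
    (conjugation_injective hW)) (conjugation_image_pureStates_subset hW) fun _ _ _ hX ↦
    hX.mem_conjugation_image_pureStates hW ?_
  rw [conjugation_apply, ← Matrix.mul_assoc, ← Matrix.mul_assoc, Matrix.mul_assoc W, hW,
    Matrix.mul_one]

end Compression

section LowDimension

variable {n : Type*} [Fintype n]

theorem eq_of_trace_eq_of_subsingleton [Subsingleton n] {X Y : Matrix n n ℂ}
    (h : X.trace = Y.trace) : X = Y := by
  ext i j
  simpa only [Matrix.trace, diag_apply, Fintype.sum_subsingleton _ i, Subsingleton.elim j i] using h

theorem mem_pureStates_of_subsingleton [Subsingleton n] {X : Matrix n n ℂ} (hX : X.trace = 1) :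
    X ∈ pureStates n := by
  have : Nonempty n := by
    by_contra! hn
    simp at hX
  have unit : star (1 : n → ℂ) ⬝ᵥ 1 = 1 := by
    rw [dotProduct, Fintype.sum_subsingleton _ (Classical.arbitrary n)]
    simp
  exact ⟨1, unit, eq_of_trace_eq_of_subsingleton (by rw [trace_ketBra, unit, hX])⟩

theorem mem_pureStates_of_rank_le_one {X : Matrix n n ℂ} (hX : X.IsHermitian) (htr : X.trace = 1)
    (hrank : X.rank ≤ 1) : X ∈ pureStates n := by
  obtain ⟨W, hW, hWX⟩ := exists_isometry_mul_conjTranspose_mul_eq X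
  have : Subsingleton (Fin X.rank) := Fin.subsingleton_iff_le_one.2 hrank
  rw [← conjugation_conjugation_conjTranspose hX hWX]
  exact conjugation_image_pureStates_subset hW (Set.mem_image_of_mem _
    (mem_pureStates_of_subsingleton ((trace_conjugation_conjTranspose hWX).trans htr)))

theorem hasTwoPointRoof_pureStates_of_subsingleton [Subsingleton n] (f : Matrix n n ℂ → ℝ)
    {σ : Matrix n n ℂ} (hσ : σ.trace = 1) : HasTwoPointRoof f (pureStates n) σ := by
  refine (hasTwoPointRoof_singleton f σ).of_face
    (Set.singleton_subset_iff.2 (mem_pureStates_of_subsingleton hσ)) fun m p X hX i ↦ ?_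
  obtain ⟨ψ, hψ, hψX⟩ := hX.mem i
  exact eq_of_trace_eq_of_subsingleton (by rw [← hψX, trace_ketBra, hψ, hσ])

theorem rank_lt_card_of_det_eq_zero {K : Type*} [Field K] [DecidableEq n] {A : Matrix n n K}
    (hA : A.det = 0) : A.rank < Fintype.card n := by
  obtain ⟨v, hv, hAv⟩ := exists_mulVec_eq_zero_iff.2 hA
  have ker_ne_bot : LinearMap.ker A.mulVecLin ≠ ⊥ :=
    Submodule.ne_bot_iff _ |>.2 ⟨v, hAv, hv⟩
  have ker_pos : 0 < Module.finrank K (LinearMap.ker A.mulVecLin) :=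
    Nat.pos_of_ne_zero (mt Submodule.finrank_eq_zero.1 ker_ne_bot)
  have rank_nullity := A.mulVecLin.finrank_range_add_finrank_ker
  rw [Module.finrank_fintype_fun_eq_card] at rank_nullity
  rw [Matrix.rank]
  lia

/-- The Bloch parametrization `r ↦ (1 + r₀ σ_x + r₁ σ_y + r₂ σ_z) / 2` of the Hermitian `2 × 2`
matrices of trace one. -/
def blochMatrix : EuclideanSpace ℝ (Fin 3) →ᵃ[ℝ] Matrix (Fin 2) (Fin 2) ℂ where
  toFun r := !![(1 + r 2) / 2, (r 0 - r 1 * Complex.I) / 2;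
    (r 0 + r 1 * Complex.I) / 2, (1 - r 2) / 2]
  linear :=
    { toFun r := !![(r 2 : ℂ) / 2, (r 0 - r 1 * Complex.I) / 2;
        (r 0 + r 1 * Complex.I) / 2, -r 2 / 2]
      map_add' r s := by
        ext i j
        fin_cases i <;> fin_cases j <;> simp <;> ring
      map_smul' t r := by
        ext i j
        fin_cases i <;> fin_cases j <;> simp <;> ring }
  map_vadd' r v := by
    ext i j
    fin_cases i <;> fin_cases j <;> simp <;> ring

theorem blochMatrix_apply (r : EuclideanSpace ℝ (Fin 3)) :
    blochMatrix r = !![(1 + r 2 : ℂ) / 2, (r 0 - r 1 * Complex.I) / 2;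
      (r 0 + r 1 * Complex.I) / 2, (1 - r 2) / 2] :=
  rfl

theorem isHermitian_blochMatrix (r : EuclideanSpace ℝ (Fin 3)) : (blochMatrix r).IsHermitian := by
  ext i j
  fin_cases i <;> fin_cases j <;> simp [blochMatrix_apply, sub_eq_add_neg]

theorem trace_blochMatrix (r : EuclideanSpace ℝ (Fin 3)) : (blochMatrix r).trace = 1 := by
  rw [blochMatrix_apply, trace_fin_two_of]
  ring

theorem det_blochMatrix (r : EuclideanSpace ℝ (Fin 3)) :
    (blochMatrix r).det = ((1 - ‖r‖ ^ 2) / 4 : ℝ) := by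
  rw [blochMatrix_apply, det_fin_two_of, EuclideanSpace.real_norm_sq_eq, Fin.sum_univ_three]
  push_cast
  linear_combination ((r 1 : ℂ) ^ 2 / 4) * Complex.I_sq

theorem exists_blochMatrix_eq {X : Matrix (Fin 2) (Fin 2) ℂ} (hX : X.IsHermitian)
    (htr : X.trace = 1) : ∃ r, blochMatrix r = X := by
  have h00 : (X 0 0).im = 0 := Complex.conj_eq_iff_im.1 (hX.apply 0 0)
  have h01 : X 0 1 = star (X 1 0) := (hX.apply 0 1).symm
  have h11 : X 1 1 = 1 - X 0 0 := by rw [← htr, trace_fin_two, add_sub_cancel_left]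
  refine ⟨!₂[2 * (X 1 0).re, 2 * (X 1 0).im, 2 * (X 0 0).re - 1], ?_⟩
  ext i j
  fin_cases i <;> fin_cases j <;>
    simp [blochMatrix_apply, Complex.ext_iff, h00, h01, h11] <;> ring

theorem blochMatrix_injective : Function.Injective blochMatrix := by
  intro r s h
  have diag_eq := congrArg Complex.re (congrFun₂ h 0 0)
  have re_eq := congrArg Complex.re (congrFun₂ h 1 0)
  have im_eq := congrArg Complex.im (congrFun₂ h 1 0)
  ext i
  fin_cases i
  · simpa [blochMatrix_apply] using re_eq
  · simpa [blochMatrix_apply] using im_eq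
  · simpa [blochMatrix_apply] using diag_eq

theorem blochMatrix_image_sphere : blochMatrix '' Metric.sphere 0 1 = pureStates (Fin 2) := by
  refine Set.Subset.antisymm ?_ ?_
  · rintro _ ⟨r, hr, rfl⟩
    have det_eq_zero : (blochMatrix r).det = 0 := by
      rw [det_blochMatrix, mem_sphere_zero_iff_norm.1 hr]
      norm_num
    have rank_lt : (blochMatrix r).rank < 2 :=
      (rank_lt_card_of_det_eq_zero det_eq_zero).trans_eq (Fintype.card_fin 2)
    exact mem_pureStates_of_rank_le_one (isHermitian_blochMatrix r) (trace_blochMatrix r)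
      (Nat.le_of_lt_succ rank_lt)
  · rintro _ ⟨ψ, hψ, rfl⟩
    obtain ⟨r, hr⟩ := exists_blochMatrix_eq (posSemidef_vecMulVec_self_star ψ).isHermitian
      ((trace_ketBra ψ).trans hψ)
    have det_eq_zero : (1 - ‖r‖ ^ 2) / 4 = 0 := by
      rw [← Complex.ofReal_eq_zero, ← det_blochMatrix, hr, det_vecMulVec]
    have norm_eq_one : ‖r‖ = 1 := by
      rw [← sq_eq_sq₀ (norm_nonneg r) zero_le_one]
      linarith
    exact ⟨r, mem_sphere_zero_iff_norm.2 norm_eq_one, hr⟩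

theorem hasTwoPointRoof_pureStates_fin_two (Q : QuadraticForm ℝ (Matrix (Fin 2) (Fin 2) ℂ))
    {σ : Matrix (Fin 2) (Fin 2) ℂ} (hσ : IsDensityMatrix σ) :
    HasTwoPointRoof Q (pureStates (Fin 2)) σ := by
  obtain ⟨r, rfl⟩ := exists_blochMatrix_eq hσ.1.isHermitian hσ.2
  have norm_le_one : ‖r‖ ≤ 1 := by
    have det_nonneg : 0 ≤ (1 - ‖r‖ ^ 2) / 4 := by
      rw [← Complex.zero_le_real, ← det_blochMatrix]
      exact hσ.1.det_nonneg
    exact (sq_le_one_iff₀ (norm_nonneg r)).1 (by linarith)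
  rw [← blochMatrix_image_sphere]
  exact (hasTwoPointRoof_sphere Q blochMatrix norm_le_one).image blochMatrix_injective

theorem hasTwoPointRoof_pureStates_fin {d : ℕ} (hd : d ≤ 2)
    (Q : QuadraticForm ℝ (Matrix (Fin d) (Fin d) ℂ)) {σ : Matrix (Fin d) (Fin d) ℂ}
    (hσ : IsDensityMatrix σ) : HasTwoPointRoof Q (pureStates (Fin d)) σ := by
  rcases hd.lt_or_eq with hd | rfl
  · have : Subsingleton (Fin d) := Fin.subsingleton_iff_le_one.2 (Nat.le_of_lt_succ hd)
    exact hasTwoPointRoof_pureStates_of_subsingleton Q hσ.2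
  · exact hasTwoPointRoof_pureStates_fin_two Q hσ

theorem hasTwoPointRoof_pureStates_of_rank_le_two [DecidableEq n]
    (Q : QuadraticForm ℝ (Matrix n n ℂ)) {ρ : Matrix n n ℂ} (hρ : IsDensityMatrix ρ)
    (hrank : ρ.rank ≤ 2) : HasTwoPointRoof Q (pureStates n) ρ := by
  obtain ⟨W, hW, hWρ⟩ := exists_isometry_mul_conjTranspose_mul_eq ρ
  rw [← conjugation_conjugation_conjTranspose hρ.1.isHermitian hWρ]
  exact hasTwoPointRoof_pureStates_conjugation hW (hasTwoPointRoof_pureStates_fin hrank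
    (Q.comp (conjugation W)) (isDensityMatrix_conjugation_conjTranspose hρ hWρ))

end LowDimension

section Tangle

variable {dA dB : ℕ}

theorem ptraceA_add (X Y : Matrix (Fin dA × Fin dB) (Fin dA × Fin dB) ℂ) :
    ptraceA (X + Y) = ptraceA X + ptraceA Y := by
  ext i i'
  simp [ptraceA, Finset.sum_add_distrib]

theorem ptraceB_add (X Y : Matrix (Fin dA × Fin dB) (Fin dA × Fin dB) ℂ) :
    ptraceB (X + Y) = ptraceB X + ptraceB Y := by
  ext j j'
  simp [ptraceB, Finset.sum_add_distrib]

theorem ptraceA_smul (t : ℝ) (X : Matrix (Fin dA × Fin dB) (Fin dA × Fin dB) ℂ) :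
    ptraceA (t • X) = t • ptraceA X := by
  ext i i'
  simp [ptraceA, Finset.mul_sum]

theorem ptraceB_smul (t : ℝ) (X : Matrix (Fin dA × Fin dB) (Fin dA × Fin dB) ℂ) :
    ptraceB (t • X) = t • ptraceB X := by
  ext j j'
  simp [ptraceB, Finset.mul_sum]

/-- The universal state inverter as a real-linear map; it is conjugate-linear over `ℂ`. -/
def inverterLinearMap (dA dB : ℕ) : Matrix (Fin dA × Fin dB) (Fin dA × Fin dB) ℂ →ₗ[ℝ]
    Matrix (Fin dA × Fin dB) (Fin dA × Fin dB) ℂ where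
  toFun := inverter
  map_add' X Y := by
    simp only [inverter, ptraceA_add, ptraceB_add, conjTranspose_add, trace_add, add_smul,
      add_kronecker, kronecker_add]
    abel
  map_smul' t X := by
    simp only [inverter, ptraceA_smul, ptraceB_smul, conjTranspose_smul, star_trivial, trace_smul,
      smul_assoc, smul_kronecker, kronecker_smul, smul_add, smul_sub, RingHom.id_apply]

/-- The real quadratic form `X ↦ Re tr (X X̃)`, which extends the pure-state tangle from
`|ψ⟩⟨ψ|` to all matrices. -/
def tangleForm (dA dB : ℕ) : QuadraticForm ℝ (Matrix (Fin dA × Fin dB) (Fin dA × Fin dB) ℂ) :=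
  LinearMap.BilinMap.toQuadraticMap
    ((LinearMap.mul ℝ _).compl₂ (inverterLinearMap dA dB) |>.compr₂
      (Complex.reLm ∘ₗ traceLinearMap _ ℝ ℂ))

theorem pureTangle_eq_tangleForm (ψ : Fin dA × Fin dB → ℂ) :
    pureTangle ψ = tangleForm dA dB (outer ψ) := by
  change _ = (outer ψ * inverter (outer ψ)).trace.re
  rw [pureTangle, outer, vecMulVec_mul, trace_vecMulVec, dotProduct_mulVec, dotProduct_comm]

theorem isConvexDecomposition_outer_iff {ι : Type*} [Fintype ι]
    {ρ : Matrix (Fin dA × Fin dB) (Fin dA × Fin dB) ℂ} {p : ι → ℝ}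
    {ψ : ι → Fin dA × Fin dB → ℂ} :
    IsConvexDecomposition (pureStates (Fin dA × Fin dB)) ρ p (fun i ↦ outer (ψ i)) ↔
      (∀ i, 0 < p i) ∧ (∑ i, p i = 1) ∧ (∀ i, star (ψ i) ⬝ᵥ ψ i = 1) ∧
        ρ = ∑ i, (p i : ℂ) • outer (ψ i) := by
  have mem_iff (i : ι) :
      outer (ψ i) ∈ pureStates (Fin dA × Fin dB) ↔ star (ψ i) ⬝ᵥ ψ i = 1 :=
    ketBra_mem_pureStates_iff
  simp only [Complex.coe_smul, ← mem_iff, eq_comm (a := ρ)]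
  exact ⟨fun h ↦ ⟨h.1, h.2, h.3, h.4⟩, fun ⟨h₁, h₂, h₃, h₄⟩ ↦ ⟨h₁, h₂, h₃, h₄⟩⟩

theorem Itangle_eq_of_forall_le {ρ : Matrix (Fin dA × Fin dB) (Fin dA × Fin dB) ℂ} {k : ℕ}
    {q : Fin k → ℝ} {φ : Fin k → Fin dA × Fin dB → ℂ}
    (hφ : IsConvexDecomposition (pureStates _) ρ q fun i ↦ outer (φ i))
    (hmin : ∀ (m : ℕ) (p : Fin m → ℝ) (X : Fin m → Matrix _ _ ℂ),
      IsConvexDecomposition (pureStates _) ρ p X →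
        ∑ i, q i * tangleForm dA dB (outer (φ i)) ≤ ∑ i, p i * tangleForm dA dB (X i)) :
    Itangle ρ = ∑ i, q i * pureTangle (φ i) := by
  refine IsLeast.csInf_eq ⟨?_, ?_⟩
  · obtain ⟨hq, hq_sum, hφ_unit, hρ⟩ := isConvexDecomposition_outer_iff.1 hφ
    exact ⟨k, q, φ, hq, hq_sum, hφ_unit, hρ, rfl⟩
  · rintro _ ⟨m, p, ψ, hp, hp_sum, hψ, hρ, rfl⟩
    simp only [pureTangle_eq_tangleForm]
    exact hmin m p _ (isConvexDecomposition_outer_iff.2 ⟨hp, hp_sum, hψ, hρ⟩)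

end Tangle

/-- For a rank-≤2 density matrix of a pair of qudits, the infimum defining the I-tangle
is attained by a decomposition into at most two pure states. -/
theorem itangle_attained_rank_two {dA dB : ℕ}
    (ρ : Matrix (Fin dA × Fin dB) (Fin dA × Fin dB) ℂ)
    (hρ : IsDensityMatrix ρ) (hrank : ρ.rank ≤ 2) :
    ∃ (q : ℝ) (φ₁ φ₂ : Fin dA × Fin dB → ℂ),
      0 ≤ q ∧ q ≤ 1 ∧
      star φ₁ ⬝ᵥ φ₁ = 1 ∧ star φ₂ ⬝ᵥ φ₂ = 1 ∧
      ρ = (q : ℂ) • outer φ₁ + ((1 - q : ℝ) : ℂ) • outer φ₂ ∧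
      Itangle ρ = q * pureTangle φ₁ + (1 - q) * pureTangle φ₂ := by
  obtain ⟨q, u, hu, hmin⟩ :=
    hasTwoPointRoof_pureStates_of_rank_le_two (tangleForm dA dB) hρ hrank
  choose φ _ hφu using hu.mem
  obtain rfl : (fun k ↦ outer (φ k)) = u := funext hφu
  obtain ⟨hq, hq_sum, hφ_unit, hρ_eq⟩ := isConvexDecomposition_outer_iff.1 hu
  have hq_one : q 1 = 1 - q 0 := by
    rw [← hq_sum, Fin.sum_univ_two, add_sub_cancel_left]
  refine ⟨q 0, φ 0, φ 1, (hq 0).le, by linarith [hq 1], hφ_unit 0, hφ_unit 1, ?_, ?_⟩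
  · rw [hρ_eq, Fin.sum_univ_two, hq_one]
  · rw [Itangle_eq_of_forall_le hu hmin, Fin.sum_univ_two, hq_one]
end
end
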